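/- arXiv:1811.08386 — 2 statements merged into one kernel-verified Lean document; each statement's English description precedes it below -/
import Mathlib

section
/- Let $I \subseteq S_0 = k[x_0,\ldots,x_{n+e}]$ be a homogeneous ideal such that $S = k[x_e,\ldots,x_{n+e}] \to R = S_0/I$ is a Noether normalization. Then $R$ is Cohen-Macaulay if and only if the initial ideal $\mathrm{in}(I)$ with respect to the degree reverse lexicographic order is minimally generated by a set of monomials in the variables $x_0,\ldots,x_{e-1}$ only. -/
set_option synthInstance.maxHeartbeats 1000000
set_option maxHeartbeats 2000000

noncomputable section

open MvPolynomial

namespace Paper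

variable (k : Type) [Field k]

/-- The degree-`d` graded component of `S₀/I` as a `k`-subspace. -/
def quotComponent {N : ℕ} (I : Ideal (MvPolynomial (Fin N) k)) (d : ℕ) :
    Submodule k (MvPolynomial (Fin N) k ⧸ I) :=
  (MvPolynomial.homogeneousSubmodule (Fin N) k d).map
    (Ideal.Quotient.mkₐ k I).toLinearMap

/-- Hilbert function of `S₀/I`. -/
def hilbFn {N : ℕ} (I : Ideal (MvPolynomial (Fin N) k)) (d : ℕ) : ℕ :=
  Module.finrank k (quotComponent k I d)

/-- `I` is a homogeneous ideal. -/
def IdealHomog {N : ℕ} (I : Ideal (MvPolynomial (Fin N) k)) : Prop :=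
  ∀ f ∈ I, ∀ d : ℕ, MvPolynomial.homogeneousComponent d f ∈ I

/-- `I` is saturated with respect to the irrelevant maximal ideal. -/
def IsSaturatedIdeal {N : ℕ} (I : Ideal (MvPolynomial (Fin N) k)) : Prop :=
  ∀ f : MvPolynomial (Fin N) k, (∀ i : Fin N, MvPolynomial.X i * f ∈ I) → f ∈ I

/-- The subscheme defined by `I` is non-degenerate: `I` contains no nonzero linear form. -/
def Nondegenerate {N : ℕ} (I : Ideal (MvPolynomial (Fin N) k)) : Prop :=
  ∀ f ∈ I, f.IsHomogeneous 1 → f = 0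

/-- `S₀/I` has Hilbert polynomial of degree `n` and multiplicity (degree) `D`. -/
def HasDeg {N : ℕ} (I : Ideal (MvPolynomial (Fin N) k)) (n D : ℕ) : Prop :=
  ∃ P : Polynomial ℚ, P.natDegree = n ∧ (D : ℚ) = P.leadingCoeff * (n.factorial : ℚ) ∧
    ∀ᶠ d : ℕ in Filter.atTop, (hilbFn k I d : ℚ) = Polynomial.eval (d : ℚ) P

/-- The irrelevant maximal ideal of `S₀/I`. -/
def irrelevantIdeal {N : ℕ} (I : Ideal (MvPolynomial (Fin N) k)) :
    Ideal (MvPolynomial (Fin N) k ⧸ I) :=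
  Ideal.span (Set.range fun i : Fin N => Ideal.Quotient.mk I (MvPolynomial.X i))

/-- `S₀/I` is Cohen-Macaulay of dimension `c`: there is a regular sequence of length `c`
in the irrelevant maximal ideal. -/
def IsCMQuot {N : ℕ} (I : Ideal (MvPolynomial (Fin N) k)) (c : ℕ) : Prop :=
  ∃ rs : List (MvPolynomial (Fin N) k ⧸ I), rs.length = c ∧
    (∀ x ∈ rs, x ∈ irrelevantIdeal k I) ∧
    RingTheory.Sequence.IsRegular (MvPolynomial (Fin N) k ⧸ I) rs

/-- The ideal of `R = S₀/I` generated by the images of `x_e, …, x_{N-1}`. -/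
def tailVarsIdeal {N : ℕ} (e : ℕ) (I : Ideal (MvPolynomial (Fin N) k)) :
    Ideal (MvPolynomial (Fin N) k ⧸ I) :=
  Ideal.span {y | ∃ i : Fin N, e ≤ (i : ℕ) ∧ y = Ideal.Quotient.mk I (MvPolynomial.X i)}

/-- The reduction number `r_S(R)` of the Noether normalization by the last variables:
the least `t > 0` with `R_{t+1} = J_{t+1}` for `J = (x_e, …, x_{N-1})R`. -/
def reductionNumber {N : ℕ} (e : ℕ) (I : Ideal (MvPolynomial (Fin N) k)) : ℕ :=
  sInf {t | 0 < t ∧ quotComponent k I (t + 1) ≤ (tailVarsIdeal k e I).restrictScalars k}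

/-- The reduction number `r(R)`: the minimum of `r_J(R₊)` over all minimal reductions `J`
of `R₊`, i.e. ideals generated by `c = dim R` linear forms. -/
def redNumAll {N : ℕ} (I : Ideal (MvPolynomial (Fin N) k)) (c : ℕ) : ℕ :=
  sInf {t | 0 < t ∧ ∃ L : Finset (MvPolynomial (Fin N) k ⧸ I),
    (L : Set (MvPolynomial (Fin N) k ⧸ I)) ⊆ quotComponent k I 1 ∧ L.card = c ∧
    quotComponent k I (t + 1) ≤
      (Ideal.span (L : Set (MvPolynomial (Fin N) k ⧸ I))).restrictScalars k}

/-- The `k`-algebra map `S = k[x_e, …, x_{N-1}] → R = S₀/I`. -/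
def nnMap {N : ℕ} (e : ℕ) (I : Ideal (MvPolynomial (Fin N) k)) :
    MvPolynomial {i : Fin N // e ≤ (i : ℕ)} k →ₐ[k] (MvPolynomial (Fin N) k ⧸ I) :=
  MvPolynomial.aeval fun i => Ideal.Quotient.mk I (MvPolynomial.X i.1)

/-- `S = k[x_e, …, x_{N-1}] → R = S₀/I` is a Noether normalization. -/
def IsNoetherNormalization {N : ℕ} (e : ℕ) (I : Ideal (MvPolynomial (Fin N) k)) : Prop :=
  Function.Injective (nnMap k e I) ∧ (nnMap k e I).toRingHom.Finite

/-- `μ_S(R) = dim_k R/S₊R`, the minimal number of generators of `R` as an `S`-module. -/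
def muS {N : ℕ} (e : ℕ) (I : Ideal (MvPolynomial (Fin N) k)) : ℕ :=
  Module.finrank k ((MvPolynomial (Fin N) k ⧸ I) ⧸ tailVarsIdeal k e I)

/-- total degree of an exponent vector -/
def tdeg {N : ℕ} (a : Fin N →₀ ℕ) : ℕ := a.sum fun _ n => n

/-- degree reverse lexicographic order with `x_0 > x_1 > ⋯ > x_{N-1}`. -/
def drlLt {N : ℕ} (a b : Fin N →₀ ℕ) : Prop :=
  tdeg a < tdeg b ∨
    (tdeg a = tdeg b ∧ ∃ i : Fin N, b i < a i ∧ ∀ j : Fin N, i < j → a j = b j)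

/-- `m` is the leading (largest, w.r.t. degrevlex) exponent of `p`. -/
def IsLeadExp {N : ℕ} (p : MvPolynomial (Fin N) k) (m : Fin N →₀ ℕ) : Prop :=
  m ∈ p.support ∧ ∀ m' ∈ p.support, m' ≠ m → drlLt m' m

/-- The initial ideal of `I` with respect to the degree reverse lexicographic order. -/
def initialIdeal {N : ℕ} (I : Ideal (MvPolynomial (Fin N) k)) :
    Ideal (MvPolynomial (Fin N) k) :=
  Ideal.span {q | ∃ p ∈ I, ∃ m, IsLeadExp k p m ∧ q = MvPolynomial.monomial m 1}

/-- `p` is homogeneous of degree `d ∈ ℤ` (`0` if `d < 0`). -/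
def HomogOfDeg {σ : Type} (p : MvPolynomial σ k) (d : ℤ) : Prop :=
  p = 0 ∨ ∃ m : ℕ, (m : ℤ) = d ∧ p.IsHomogeneous m

/-- A minimal graded free resolution of the graded module `M` (with grading `Mdeg`) over
`A = k[σ]`, recording the graded Betti numbers `β i j = dim_k Tor_i^A(M,k)_{i+j}`:
the `i`-th free module has `β i j` generators in internal degree `i + j`. -/
structure MinGradedFreeRes (σ : Type) (M : Type) [AddCommGroup M]
    [Module (MvPolynomial σ k) M] [Module k M] (Mdeg : ℤ → Submodule k M) where
  β : ℕ → ℤ → ℕ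
  rowFinite : ∀ i, (Function.support (β i)).Finite
  d : ∀ i : ℕ, (((j : ℤ) × Fin (β (i + 1) j)) →₀ MvPolynomial σ k) →ₗ[MvPolynomial σ k]
      ((j : ℤ) × Fin (β i j)) →₀ MvPolynomial σ k
  ε : (((j : ℤ) × Fin (β 0 j)) →₀ MvPolynomial σ k) →ₗ[MvPolynomial σ k] M
  graded : ∀ (i : ℕ) (j j' : ℤ) (s : Fin (β (i + 1) j)) (s' : Fin (β i j')),
      HomogOfDeg k (d i (Finsupp.single ⟨j, s⟩ 1) ⟨j', s'⟩) (j + 1 - j')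
  minimal : ∀ (i : ℕ) (j j' : ℤ) (s : Fin (β (i + 1) j)) (s' : Fin (β i j')),
      j' = j + 1 → d i (Finsupp.single ⟨j, s⟩ 1) ⟨j', s'⟩ = 0
  eps_graded : ∀ (j : ℤ) (s : Fin (β 0 j)), ε (Finsupp.single ⟨j, s⟩ 1) ∈ Mdeg j
  eps_surj : Function.Surjective ε
  exact0 : Function.Exact (d 0) ε
  exactSeq : ∀ i : ℕ, Function.Exact (d (i + 1)) (d i)

/-- `Mdeg` is a grading of the `k[σ]`-module `M`. -/
def IsGrading (σ : Type) (M : Type) [AddCommGroup M]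
    [Module (MvPolynomial σ k) M] [Module k M] (Mdeg : ℤ → Submodule k M) : Prop :=
  (⨆ d, Mdeg d) = ⊤ ∧ iSupIndep Mdeg ∧
    ∀ (i : σ) (d : ℤ), ∀ x ∈ Mdeg d, (MvPolynomial.X i : MvPolynomial σ k) • x ∈ Mdeg (d + 1)

/-- The standard grading on `S₀/I` (indexed by `ℤ`). -/
def quotDeg {N : ℕ} (I : Ideal (MvPolynomial (Fin N) k)) (d : ℤ) :
    Submodule k (MvPolynomial (Fin N) k ⧸ I) :=
  if 0 ≤ d then quotComponent k I d.toNat else ⊥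

/-- The standard grading on a homogeneous ideal `I ⊆ S₀` (indexed by `ℤ`). -/
def idealDeg {N : ℕ} (I : Ideal (MvPolynomial (Fin N) k)) (d : ℤ) :
    Submodule k ↥I :=
  if 0 ≤ d then
    Submodule.comap ((I.subtype).restrictScalars k)
      (MvPolynomial.homogeneousSubmodule (Fin N) k d.toNat)
  else ⊥

/-- `χ_m = Σ_{j=0}^m (-1)^j β_{m-j,j}`. -/
def chiOf (β : ℕ → ℤ → ℕ) (m : ℤ) : ℤ :=
  if m < 0 then 0
  else ∑ j ∈ Finset.range (m.toNat + 1), (-1 : ℤ) ^ j * (β (m.toNat - j) (j : ℤ) : ℤ)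

/-- projective dimension read off from a minimal resolution's Betti table -/
def pdOf (β : ℕ → ℤ → ℕ) : ℕ∞ :=
  ⨆ i : {i : ℕ // ∃ j, β i j ≠ 0}, ((i : ℕ) : ℕ∞)

/-- index type of the variables `x_t, …, x_{N-1}` -/
def tailIdx (N t : ℕ) := {i : Fin N // t ≤ (i : ℕ)}


/-- The `S = k[x_e,…,x_{N-1}]`-module structure on `R = S₀/I` via `nnMap`. -/
def nnModule {N : ℕ} (e : ℕ) (I : Ideal (MvPolynomial (Fin N) k)) :
    Module (MvPolynomial {i : Fin N // e ≤ (i : ℕ)} k) (MvPolynomial (Fin N) k ⧸ I) :=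
  Module.compHom _ (nnMap k e I).toRingHom

/-- The underlying set of the `S`-submodule of `R = S₀/I` spanned by `s`. -/
def nnSpan {N : ℕ} (e : ℕ) (I : Ideal (MvPolynomial (Fin N) k))
    (s : Set (MvPolynomial (Fin N) k ⧸ I)) : Set (MvPolynomial (Fin N) k ⧸ I) :=
  letI := nnModule k e I
  (Submodule.span (MvPolynomial {i : Fin N // e ≤ (i : ℕ)} k) s : Set _)

/-- The truncated ideal `(I)_{≥ r+1}`, generated by the homogeneous elements of `I`
of degree at least `r + 1`. -/
def truncIdeal {N : ℕ} (I : Ideal (MvPolynomial (Fin N) k)) (r : ℕ) :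
    Ideal (MvPolynomial (Fin N) k) :=
  Ideal.span {f | f ∈ I ∧ ∃ d : ℕ, r + 1 ≤ d ∧ f.IsHomogeneous d}

end Paper

end

/-!
Let `y` be the sequence `x_{N-1}, …, x_e`. Since `R` is finite over `S`, the only prime below the
irrelevant ideal that contains `y` is that ideal itself, so `y` is a system of parameters of the
local ring of `R` there. In a local ring of maximal depth every system of parameters is a regular
sequence, and homogeneity brings regularity back from the local ring to `R`. Hence `R` is
Cohen-Macaulay iff every `x_j` with `j ≥ e` is a nonzerodivisor modulo `I + (x_{j+1}, …, x_{N-1})`.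

If a homogeneous polynomial has its degrevlex leading monomial free of `x_{j+1}, …, x_{N-1}` and
divisible by `x_j`, then modulo these later variables the whole polynomial is divisible by `x_j`.
So the nonzerodivisor condition can be read off `in(I)`: it says that a monomial `m` free of the
later variables lies in `in(I)` as soon as `x_j m` does, that is, that no minimal generator of
`in(I)` has `x_j` as its last variable.
-/

namespace Paper

open MvPolynomial

section LocalAlgebra

open RingTheory.Sequence IsLocalRing Pointwise CategoryTheory Abelian

universe u v

variable {A : Type u} [CommRing A]

lemma exists_saturated_comap_lsmul_pow {M : Type v} [AddCommGroup M] [Module A M]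
    [IsNoetherian A M] (N : Submodule A M) (a : A) :
    ∃ s, N ≤ N.comap (LinearMap.lsmul A M (a ^ s)) ∧
      ∀ x, a • x ∈ N.comap (LinearMap.lsmul A M (a ^ s)) →
        x ∈ N.comap (LinearMap.lsmul A M (a ^ s)) := by
  let F : ℕ →o Submodule A M :=
    ⟨fun s => N.comap (LinearMap.lsmul A M (a ^ s)), monotone_nat_of_le_succ fun s x hx => by
      simp only [Submodule.mem_comap, LinearMap.lsmul_apply] at hx ⊢
      rw [pow_succ', mul_smul]
      exact N.smul_mem _ hx⟩
  obtain ⟨s, hs⟩ := monotone_stabilizes_iff_noetherian.2 ‹IsNoetherian A M› F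
  refine ⟨s, fun x hx => N.smul_mem _ hx, fun x hx => ?_⟩
  have hx' : x ∈ F (s + 1) := by
    simpa only [F, OrderHom.coe_mk, Submodule.mem_comap, LinearMap.lsmul_apply, pow_succ,
      mul_smul] using hx
  rwa [← hs (s + 1) s.le_succ] at hx'

lemma supportDim_comap_lsmul_le {M : Type v} [AddCommGroup M] [Module A M]
    {a : A} (ha : IsSMulRegular M a) (N : Submodule A M) :
    Module.supportDim A (N.comap (LinearMap.lsmul A M a)) ≤ Module.supportDim A N :=
  Module.supportDim_le_of_injective ((LinearMap.lsmul A M a).restrict fun _ hx => hx)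
    fun _ _ hxy => Subtype.ext (ha (congrArg Subtype.val hxy))

lemma supportDim_map_mkQ_le (M : Type v) [AddCommGroup M] [Module A M] (a : A)
    (N : Submodule A M) :
    Module.supportDim A (N.map (a • (⊤ : Submodule A M)).mkQ) ≤
      Module.supportDim A (QuotSMulTop a N) := by
  let g : N →ₗ[A] N.map (a • (⊤ : Submodule A M)).mkQ :=
    (a • (⊤ : Submodule A M)).mkQ.restrict fun _ hx => Submodule.mem_map_of_mem hx
  have hg : a • (⊤ : Submodule A N) ≤ LinearMap.ker g := by
    rintro _ ⟨z, -, rfl⟩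
    exact Subtype.ext ((Submodule.Quotient.mk_eq_zero _).2
      (Submodule.smul_mem_pointwise_smul _ _ _ trivial))
  refine Module.supportDim_le_of_surjective (Submodule.liftQ _ g hg) ?_
  rintro ⟨_, z, hz, rfl⟩
  exact ⟨Submodule.Quotient.mk ⟨z, hz⟩, rfl⟩

variable [IsLocalRing A]

lemma map_mkQ_ne_bot_of_saturated {M : Type v} [AddCommGroup M] [Module A M] [IsNoetherian A M]
    {a : A} (ha : a ∈ maximalIdeal A) {N : Submodule A M} (hN : N ≠ ⊥)
    (hsat : ∀ x, a • x ∈ N → x ∈ N) : N.map (a • (⊤ : Submodule A M)).mkQ ≠ ⊥ := by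
  contrapose! hN
  refine Submodule.eq_bot_of_le_smul_of_le_jacobson_bot (Ideal.span {a}) N
    (IsNoetherian.noetherian _) (fun x hx => ?_)
    ((Ideal.span_singleton_le_iff_mem _).2 (maximalIdeal_le_jacobson _ ha))
  have hx0 : x ∈ a • (⊤ : Submodule A M) := by
    rw [← Submodule.Quotient.mk_eq_zero, ← Submodule.mkQ_apply, ← Submodule.mem_bot A, ← hN]
    exact Submodule.mem_map_of_mem hx
  obtain ⟨z, -, rfl⟩ := hx0
  exact Submodule.smul_mem_smul (Ideal.mem_span_singleton_self a) (hsat z hx)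

/-- `ys` is a multiplicity system of `M`: the only point of the support of `M / (ys) M` is the
closed one. For `M` finite over a Noetherian local ring and `ys` in the maximal ideal this says
that `M / (ys) M` has finite length, and with `ys.length = dim M` it says that `ys` is a system of
parameters. -/
def IsMultiplicitySystem (M : Type v) [AddCommGroup M] [Module A M] (ys : List A) : Prop :=
  Module.support A M ∩ PrimeSpectrum.zeroLocus {r | r ∈ ys} ⊆ {closedPoint A}

namespace IsMultiplicitySystem

variable {M : Type v} [AddCommGroup M] [Module A M] {y : A} {ys : List A}

lemma of_cons (h : IsMultiplicitySystem M (y :: ys)) {N : Type v} [AddCommGroup N] [Module A N]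
    (hN : Module.support A N ⊆ Module.support A M ∩ PrimeSpectrum.zeroLocus {y}) :
    IsMultiplicitySystem N ys := fun p hp =>
  h ⟨(hN hp.1).1, by
    rintro r hr
    rcases List.mem_cons.1 hr with rfl | hr
    exacts [(hN hp.1).2 rfl, hp.2 hr]⟩

lemma quotSMulTop [Module.Finite A M] (h : IsMultiplicitySystem M (y :: ys)) :
    IsMultiplicitySystem (QuotSMulTop y M) ys :=
  h.of_cons (Module.support_quotSMulTop ..).subset

lemma ker_lsmul [IsNoetherian A M] (h : IsMultiplicitySystem M (y :: ys)) :
    IsMultiplicitySystem (LinearMap.ker (LinearMap.lsmul A M y)) ys :=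
  h.of_cons fun p hp => by
    refine ⟨Module.support_subset_of_injective _ (Submodule.injective_subtype _) hp, ?_⟩
    rw [Module.mem_support_iff_of_finite] at hp
    rintro _ rfl
    exact hp (Module.mem_annihilator.2 fun x => Subtype.ext x.2)

lemma supportDim_le_length [IsNoetherianRing A] [Module.Finite A M]
    (hys : ∀ r ∈ ys, r ∈ maximalIdeal A) (h : IsMultiplicitySystem M ys) :
    Module.supportDim A M ≤ ys.length := by
  induction ys generalizing M with
  | nil =>
    have : Subsingleton (Module.support A M) := ⟨fun p q => Subtype.ext <|
      (h ⟨p.2, by simp⟩).trans (h ⟨q.2, by simp⟩).symm⟩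
    simpa [Module.supportDim] using Order.krullDim_nonpos_of_subsingleton
  | cons y ys ih =>
    rw [List.forall_mem_cons] at hys
    calc Module.supportDim A M
        ≤ Module.supportDim A (QuotSMulTop y M) + 1 :=
          Module.supportDim_le_supportDim_quotSMulTop_succ hys.1
      _ ≤ ys.length + 1 := by gcongr; exact ih hys.2 h.quotSMulTop
      _ = (y :: ys).length := by push_cast [List.length_cons]; rfl

end IsMultiplicitySystem

variable [IsNoetherianRing A]

lemma length_le_supportDim_of_ne_bot {M : Type v} [AddCommGroup M] [Module A M]
    [Module.Finite A M] {rs : List A} (hrs : ∀ r ∈ rs, r ∈ maximalIdeal A)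
    (hreg : IsWeaklyRegular M rs) {N : Submodule A M} (hN : N ≠ ⊥) :
    (rs.length : WithBot ℕ∞) ≤ Module.supportDim A N := by
  induction rs generalizing M with
  | nil =>
    have : Nontrivial N := (Submodule.nontrivial_iff_ne_bot).2 hN
    have : Nonempty (Module.support A N) := Module.nonempty_support_of_nontrivial.to_subtype
    simpa [Module.supportDim] using Order.krullDim_nonneg
  | cons a rs ih =>
    obtain ⟨ha, hreg⟩ := (isWeaklyRegular_cons_iff M a rs).1 hreg
    rw [List.forall_mem_cons] at hrs
    obtain ⟨s, hle, hsat⟩ := exists_saturated_comap_lsmul_pow N a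
    set N' := N.comap (LinearMap.lsmul A M (a ^ s))
    have hN' : N' ≠ ⊥ := ne_bot_of_le_ne_bot hN hle
    calc ((a :: rs).length : WithBot ℕ∞)
        = rs.length + 1 := by push_cast [List.length_cons]; rfl
      _ ≤ Module.supportDim A (N'.map (a • (⊤ : Submodule A M)).mkQ) + 1 := by
          gcongr; exact ih hrs.2 hreg (map_mkQ_ne_bot_of_saturated hrs.1 hN' hsat)
      _ ≤ Module.supportDim A (QuotSMulTop a N') + 1 := by
          gcongr; exact supportDim_map_mkQ_le M a N'
      _ = Module.supportDim A N' :=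
          Module.supportDim_quotSMulTop_succ_eq_supportDim (ha.submodule N' a) hrs.1
      _ ≤ Module.supportDim A N := supportDim_comap_lsmul_le (ha.pow s) N

/-- `depth M ≥ n` for a finite module over a Noetherian local ring, in elementary terms: some
`M`-regular sequence of length `n` lies in the maximal ideal. -/
def HasRegularSequence (A : Type u) [CommRing A] [IsLocalRing A] (M : Type v) [AddCommGroup M]
    [Module A M] (n : ℕ) : Prop :=
  ∃ rs : List A, rs.length = n ∧ (∀ r ∈ rs, r ∈ maximalIdeal A) ∧ IsRegular M rs

variable [Small.{v} A] {M : Type v} [AddCommGroup M] [Module A M] [Module.Finite A M]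

lemma subsingleton_ext_iff_hasRegularSequence [Nontrivial M] (n : ℕ) :
    (∀ i < n, Subsingleton
      (Ext (ModuleCat.of A (Shrink.{v} (A ⧸ maximalIdeal A))) (ModuleCat.of A M) i)) ↔
    HasRegularSequence A M n := by
  have hlt : maximalIdeal A • (⊤ : Submodule A M) < ⊤ :=
    lt_top_iff_ne_top.2 fun h => top_ne_bot <|
      Submodule.eq_bot_of_le_smul_of_le_jacobson_bot (maximalIdeal A) (⊤ : Submodule A M)
        Module.Finite.fg_top h.ge (maximalIdeal_le_jacobson _)
  exact (ModuleCat.exists_isRegular_tfae (maximalIdeal A) n (ModuleCat.of A M) hlt).out 1 3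

/-- Rees: the long exact `Ext` sequence of `0 → M → M → M / b M → 0` lowers the depth by one. -/
lemma HasRegularSequence.quotSMulTop {n : ℕ} (h : HasRegularSequence A M (n + 1))
    {b : A} (hb : b ∈ maximalIdeal A) (hbM : IsSMulRegular M b) :
    HasRegularSequence A (QuotSMulTop b M) n := by
  have : Nontrivial M := h.choose_spec.2.2.nontrivial
  have : Nontrivial (QuotSMulTop b M) := nontrivial_quotSMulTop_of_mem_maximalIdeal M hb
  rw [← subsingleton_ext_iff_hasRegularSequence] at h ⊢
  intro i hi
  have hi₀ := AddCommGrpCat.isZero_of_iff_subsingleton.mpr (h i (by omega))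
  have hi₁ := AddCommGrpCat.isZero_of_iff_subsingleton.mpr (h (i + 1) (by omega))
  exact AddCommGrpCat.subsingleton_of_isZero <| ShortComplex.Exact.isZero_of_both_zeros
    ((Ext.covariant_sequence_exact₃' _
      (IsSMulRegular.smulShortComplex_shortExact (M := ModuleCat.of A M) hbM)) i (i + 1) rfl)
    (hi₀.eq_zero_of_src _) (hi₁.eq_zero_of_tgt _)

theorem IsMultiplicitySystem.isWeaklyRegular {ys : List A}
    (hys : ∀ r ∈ ys, r ∈ maximalIdeal A) (h : IsMultiplicitySystem M ys)
    (hM : HasRegularSequence A M ys.length) : IsWeaklyRegular M ys := by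
  induction ys generalizing M with
  | nil => simp
  | cons y ys ih =>
    rw [List.forall_mem_cons] at hys
    have hy : IsSMulRegular M y := by
      rw [isSMulRegular_iff_ker_lsmul_eq_bot]
      by_contra hker
      obtain ⟨rs, hlen, hrs, hreg⟩ := hM
      have hle : (rs.length : WithBot ℕ∞) ≤ ys.length :=
        (length_le_supportDim_of_ne_bot hrs hreg.toIsWeaklyRegular hker).trans
          (h.ker_lsmul.supportDim_le_length hys.2)
      rw [hlen, List.length_cons] at hle
      exact absurd (by exact_mod_cast hle) (Nat.not_succ_le_self ys.length)
    exact (isWeaklyRegular_cons_iff M y ys).2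
      ⟨hy, ih hys.2 h.quotSMulTop (hM.quotSMulTop hys.1 hy)⟩

end LocalAlgebra

section DegRevLex

/-- Type synonym carrying the degree reverse lexicographic order on exponents, in which `a < b` if
`a` has smaller degree, or equal degree and a larger entry at the last place where they differ. -/
def DegRevLex (σ : Type*) : Type _ := σ →₀ ℕ

variable {σ : Type*}

noncomputable instance : AddCommMonoid (DegRevLex σ) := inferInstanceAs (AddCommMonoid (σ →₀ ℕ))

/-- The identity, as an equivalence of an exponent with its copy in `DegRevLex σ`. -/
noncomputable def toDegRevLex : (σ →₀ ℕ) ≃+ DegRevLex σ := AddEquiv.refl _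

namespace DegRevLex

/-- The embedding by which the order of `DegRevLex σ` is defined: the degree, ties being broken by
the dual of the colexicographic order. -/
noncomputable def key (a : DegRevLex σ) : ℕ ×ₗ (Colex (σ →₀ ℕ))ᵒᵈ :=
  toLex ((toDegRevLex.symm a).degree, OrderDual.toDual (toColex (toDegRevLex.symm a)))

lemma key_add (a b : DegRevLex σ) : key (a + b) = key a + key b := by
  simp only [key, map_add]; rfl

variable [LinearOrder σ]

lemma key_lt_key_iff {a b : σ →₀ ℕ} :
    key (toDegRevLex a) < key (toDegRevLex b) ↔
      a.degree < b.degree ∨ a.degree = b.degree ∧ ∃ i, b i < a i ∧ ∀ j, i < j → a j = b j := by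
  simp only [key, AddEquiv.symm_apply_apply, Prod.Lex.toLex_lt_toLex, OrderDual.toDual_lt_toDual,
    Finsupp.Colex.lt_iff]
  refine or_congr_right (and_congr_right fun _ => exists_congr fun i => ?_)
  exact and_comm.trans (and_congr_right fun _ => forall₂_congr fun j _ => eq_comm)

noncomputable instance : LinearOrder (DegRevLex σ) :=
  LinearOrder.lift' key fun _ _ h =>
    toDegRevLex.symm.injective (congrArg (fun x => ofColex (OrderDual.ofDual (ofLex x).2)) h)

noncomputable instance : IsOrderedAddMonoid (DegRevLex σ) :=
  Function.Injective.isOrderedAddMonoid key key_add Iff.rfl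

lemma toDegRevLex_monotone : Monotone (toDegRevLex : (σ →₀ ℕ) → DegRevLex σ) := by
  intro a b hab
  obtain ⟨c, rfl⟩ := exists_add_of_le hab
  rcases eq_or_ne c 0 with rfl | hc
  · rw [add_zero]
  · refine le_of_lt (key_lt_key_iff.2 (Or.inl ?_))
    rw [map_add]
    exact Nat.lt_add_of_pos_right (Nat.pos_of_ne_zero ((Finsupp.degree_eq_zero_iff c).not.2 hc))

instance [Finite σ] : WellFoundedLT (DegRevLex σ) :=
  have := toDegRevLex_monotone.wellQuasiOrderedLE_of_wellQuasiOrderedLE_of_surjective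
    (toDegRevLex (σ := σ)).surjective
  inferInstance

end DegRevLex

/-- The degree reverse lexicographic order as a `MonomialOrder`; the first variable is the
largest. -/
noncomputable def degRevLex (σ : Type*) [LinearOrder σ] [Finite σ] : MonomialOrder σ where
  syn := DegRevLex σ
  toSyn := toDegRevLex
  toSyn_monotone := DegRevLex.toDegRevLex_monotone

lemma degRevLex_lt_iff [LinearOrder σ] [Finite σ] {a b : σ →₀ ℕ} :
    (degRevLex σ).toSyn a < (degRevLex σ).toSyn b ↔
      a.degree < b.degree ∨ a.degree = b.degree ∧ ∃ i, b i < a i ∧ ∀ j, i < j → a j = b j :=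
  DegRevLex.key_lt_key_iff

end DegRevLex

section LeadExps

variable {σ R : Type*} [CommSemiring R] {mo : MonomialOrder σ} {I J : Ideal (MvPolynomial σ R)}

/-- The exponents of the monomials in the initial ideal of `I` with respect to `mo`. -/
def leadExps (mo : MonomialOrder σ) (I : Ideal (MvPolynomial σ R)) : Set (σ →₀ ℕ) :=
  {m | ∃ p ∈ I, p ≠ 0 ∧ mo.degree p = m}

lemma degree_mem_leadExps {p : MvPolynomial σ R} (hp : p ∈ I) (h0 : p ≠ 0) :
    mo.degree p ∈ leadExps mo I :=
  ⟨p, hp, h0, rfl⟩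

lemma leadExps_mono (h : I ≤ J) : leadExps mo I ⊆ leadExps mo J :=
  fun _ ⟨p, hp, h0, hm⟩ => ⟨p, h hp, h0, hm⟩

lemma monomial_mem_leadExps [Nontrivial R] {m : σ →₀ ℕ} (h : monomial m (1 : R) ∈ I) :
    m ∈ leadExps mo I := by
  classical
  refine ⟨_, h, (monomial_eq_zero (s := m)).not.2 one_ne_zero, ?_⟩
  rw [MonomialOrder.degree_monomial, if_neg one_ne_zero]

lemma isUpperSet_leadExps [Nontrivial R] [NoZeroDivisors R] : IsUpperSet (leadExps mo I) := by
  classical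
  rintro _ m' hmm' ⟨p, hp, h0, rfl⟩
  obtain ⟨c, rfl⟩ := exists_add_of_le hmm'
  have hc : monomial c (1 : R) ≠ 0 := (monomial_eq_zero (s := c)).not.2 one_ne_zero
  refine ⟨p * monomial c 1, I.mul_mem_right _ hp, mul_ne_zero h0 hc, ?_⟩
  rw [MonomialOrder.degree_mul h0 hc, MonomialOrder.degree_monomial, if_neg one_ne_zero]

lemma mem_of_mul_mem_of_leadExps {K : Type*} [Field K] {I : Ideal (MvPolynomial σ K)}
    {u : MvPolynomial σ K} (hu : u ≠ 0)
    (h : ∀ m, m + mo.degree u ∈ leadExps mo I → m ∈ leadExps mo I) {f : MvPolynomial σ K}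
    (hf : u * f ∈ I) : f ∈ I := by
  induction hm : mo.toSyn (mo.degree f) using WellFoundedLT.induction generalizing f with
  | ind m ih =>
    subst hm
    rcases eq_or_ne f 0 with rfl | hf0
    · exact I.zero_mem
    have hdeg : mo.degree f + mo.degree u ∈ leadExps mo I := by
      rw [add_comm, ← MonomialOrder.degree_mul hu hf0]
      exact degree_mem_leadExps hf (mul_ne_zero hu hf0)
    -- Cancelling the leading terms of `f` and `g` leaves the same problem in smaller degree.
    obtain ⟨g, hg, hg0, hgf⟩ := h _ hdeg
    have hs : mo.sPolynomial f g = C (mo.leadingCoeff g) * f - C (mo.leadingCoeff f) * g := by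
      rw [MonomialOrder.sPolynomial, hgf, tsub_self]; rfl
    have hsI : mo.sPolynomial f g ∈ I := by
      rcases eq_or_ne (mo.sPolynomial f g) 0 with h0 | h0
      · exact h0 ▸ I.zero_mem
      refine ih _ (mo.sPolynomial_lt_of_degree_ne_zero_of_degree_eq hgf.symm h0) ?_ rfl
      rw [hs, mul_sub, mul_left_comm]
      exact I.sub_mem (I.mul_mem_left _ hf) (I.mul_mem_left _ (I.mul_mem_left _ hg))
    have hcf : C (mo.leadingCoeff g) * f ∈ I := by
      rw [← sub_add_cancel (C (mo.leadingCoeff g) * f) (C (mo.leadingCoeff f) * g), ← hs]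
      exact I.add_mem hsI (I.mul_mem_left _ hg)
    rwa [Ideal.unit_mul_mem_iff_mem] at hcf
    exact (isUnit_iff_ne_zero.2 (mo.leadingCoeff_ne_zero_iff.2 hg0)).map C

end LeadExps

section InitialIdeal

variable {k : Type} [Field k] {N : ℕ}

lemma isLeadExp_iff {p : MvPolynomial (Fin N) k} {m : Fin N →₀ ℕ} :
    IsLeadExp k p m ↔ p ≠ 0 ∧ (degRevLex (Fin N)).degree p = m := by
  have hlt : ∀ a b, drlLt a b ↔ (degRevLex (Fin N)).toSyn a < (degRevLex (Fin N)).toSyn b :=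
    fun a b => degRevLex_lt_iff.symm
  simp only [IsLeadExp, hlt]
  constructor
  · rintro ⟨hm, hmax⟩
    have hp : p ≠ 0 := MvPolynomial.support_nonempty.1 ⟨m, hm⟩
    refine ⟨hp, by_contra fun hne => ?_⟩
    exact (hmax _ (MonomialOrder.degree_mem_support hp) hne).not_ge (MonomialOrder.le_degree hm)
  · rintro ⟨hp, rfl⟩
    refine ⟨MonomialOrder.degree_mem_support hp, fun m' hm' hne => ?_⟩
    exact (MonomialOrder.le_degree hm').lt_of_ne ((degRevLex (Fin N)).toSyn.injective.ne hne)

lemma initialIdeal_eq_span (I : Ideal (MvPolynomial (Fin N) k)) :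
    initialIdeal k I =
      Ideal.span ((fun m => monomial m (1 : k)) '' leadExps (degRevLex (Fin N)) I) := by
  simp only [initialIdeal, isLeadExp_iff]
  congr 1
  ext q
  constructor
  · rintro ⟨p, hp, m, ⟨h0, hm⟩, rfl⟩
    exact ⟨m, ⟨p, hp, h0, hm⟩, rfl⟩
  · rintro ⟨m, ⟨p, hp, h0, hm⟩, rfl⟩
    exact ⟨p, hp, m, ⟨h0, hm⟩, rfl⟩

lemma monomial_mem_span_monomial_image {σ R : Type*} [CommSemiring R] [Nontrivial R]
    {G : Set (σ →₀ ℕ)} {m : σ →₀ ℕ} :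
    monomial m (1 : R) ∈ Ideal.span ((fun m' => monomial m' (1 : R)) '' G) ↔
      ∃ m' ∈ G, m' ≤ m := by
  classical
  simp [mem_ideal_span_monomial_image, support_monomial]

lemma span_monomial_image_eq_iff {σ R : Type*} [CommSemiring R] [Nontrivial R]
    {G H : Set (σ →₀ ℕ)} :
    Ideal.span ((fun m => monomial m (1 : R)) '' G) =
        Ideal.span ((fun m => monomial m (1 : R)) '' H) ↔
      upperClosure G = upperClosure H := by
  refine ⟨fun h => ?_, fun h => ?_⟩
  · ext m
    simp only [SetLike.mem_coe, mem_upperClosure]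
    rw [← monomial_mem_span_monomial_image (R := R), h, monomial_mem_span_monomial_image]
  · ext p
    simp only [mem_ideal_span_monomial_image, ← mem_upperClosure, h]

end InitialIdeal

section BayerStillman

attribute [local instance] MvPolynomial.gradedAlgebra

variable {σ R : Type*}

lemma degree_eq_of_forall_mem_support [CommSemiring R] {mo : MonomialOrder σ}
    {p : MvPolynomial σ R} {m : σ →₀ ℕ} (hm : m ∈ p.support)
    (h : ∀ a ∈ p.support, mo.toSyn a ≤ mo.toSyn m) : mo.degree p = m :=
  mo.toSyn.injective <|
    (h _ (mo.degree_mem_support (support_nonempty.1 ⟨m, hm⟩))).antisymm (mo.le_degree hm)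

lemma mem_leadExps_of_forall_mem_support [CommSemiring R] {mo : MonomialOrder σ}
    {I : Ideal (MvPolynomial σ R)} {p : MvPolynomial σ R} (hp : p ∈ I) {m : σ →₀ ℕ}
    (hm : m ∈ p.support) (h : ∀ a ∈ p.support, mo.toSyn a ≤ mo.toSyn m) :
    m ∈ leadExps mo I :=
  ⟨p, hp, support_nonempty.1 ⟨m, hm⟩, degree_eq_of_forall_mem_support hm h⟩

lemma mem_support_homogeneousComponent [CommSemiring R] {p : MvPolynomial σ R} {a : σ →₀ ℕ}
    {d : ℕ} :
    a ∈ (homogeneousComponent d p).support ↔ a.degree = d ∧ a ∈ p.support := by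
  classical
  rw [mem_support_iff, coeff_homogeneousComponent, mem_support_iff]
  split_ifs with h <;> simp [h]

variable [CommRing R] {I : Ideal (MvPolynomial σ R)}

lemma exists_isHomogeneous_of_mem_leadExps (hI : I.IsHomogeneous (homogeneousSubmodule σ R))
    {mo : MonomialOrder σ} {m : σ →₀ ℕ} (hm : m ∈ leadExps mo I) :
    ∃ p ∈ I, p ≠ 0 ∧ p.IsHomogeneous m.degree ∧ mo.degree p = m := by
  obtain ⟨p, hp, hp0, rfl⟩ := hm
  have hmem : mo.degree p ∈ (homogeneousComponent (mo.degree p).degree p).support :=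
    mem_support_homogeneousComponent.2 ⟨rfl, mo.degree_mem_support hp0⟩
  exact ⟨_, homogeneousComponent_mem_of_mem hI hp _, support_nonempty.1 ⟨_, hmem⟩,
    homogeneousComponent_isHomogeneous _ _, degree_eq_of_forall_mem_support hmem fun a ha =>
      mo.le_degree (mem_support_homogeneousComponent.1 ha).2⟩

variable [LinearOrder σ] [Finite σ]

lemma degRevLex_lt_of_apply_ne_zero {T : Set σ} (hT : IsUpperSet T) {a m : σ →₀ ℕ}
    (hdeg : a.degree = m.degree) (hm : ∀ l ∈ T, m l = 0) {l : σ} (hl : l ∈ T) (hal : a l ≠ 0) :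
    (degRevLex σ).toSyn a < (degRevLex σ).toSyn m := by
  refine lt_of_le_of_ne (not_lt.1 fun hlt => ?_) fun heq => hal ?_
  · rcases degRevLex_lt_iff.1 hlt with h | ⟨-, i, hi, heq⟩
    · exact h.ne' hdeg
    have hil : i < l := lt_of_not_ge fun hli => by
      rw [hm i (hT hli hl)] at hi
      exact Nat.not_lt_zero _ hi
    exact hal ((heq l hil).symm.trans (hm l hl))
  · rw [(degRevLex σ).toSyn.injective heq, hm l hl]

/-- Components of degree `|m|` suffice, and there the monomials involving a variable from `T` are
smaller than `m`. -/
lemma mem_leadExps_of_mem_leadExps_sup (hI : I.IsHomogeneous (homogeneousSubmodule σ R))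
    {T : Set σ} (hT : IsUpperSet T) {m : σ →₀ ℕ} (hm : ∀ l ∈ T, m l = 0)
    (h : m ∈ leadExps (degRevLex σ) (I ⊔ Ideal.span (X '' T))) :
    m ∈ leadExps (degRevLex σ) I := by
  obtain ⟨p, hp, hp0, rfl⟩ := h
  obtain ⟨g, hg, h, hh, rfl⟩ := Submodule.mem_sup.1 hp
  set m := (degRevLex σ).degree (g + h)
  have hT' : ∀ a ∈ h.support, ∃ l ∈ T, a l ≠ 0 := mem_ideal_span_X_image.1 hh
  refine mem_leadExps_of_forall_mem_support (homogeneousComponent_mem_of_mem hI hg m.degree) ?_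
    fun a ha => ?_
  · have hmh : coeff m h = 0 := by
      by_contra hne
      obtain ⟨l, hl, hml⟩ := hT' m (mem_support_iff.2 hne)
      exact hml (hm l hl)
    have hmp : coeff m (g + h) ≠ 0 := (degRevLex σ).coeff_degree_ne_zero_iff.2 hp0
    rw [coeff_add, hmh, add_zero] at hmp
    exact mem_support_homogeneousComponent.2 ⟨rfl, mem_support_iff.2 hmp⟩
  · obtain ⟨hdeg, ha⟩ := mem_support_homogeneousComponent.1 ha
    by_cases hah : a ∈ h.support
    · obtain ⟨l, hl, hal⟩ := hT' a hah
      exact (degRevLex_lt_of_apply_ne_zero hT hdeg hm hl hal).le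
    · refine (degRevLex σ).le_degree (mem_support_iff.2 ?_)
      rw [coeff_add, notMem_support_iff.1 hah, add_zero]
      exact mem_support_iff.1 ha

lemma modMonomial_single_mem_span_X {p : MvPolynomial σ R} {m : σ →₀ ℕ} {j : σ}
    (hp : p.IsHomogeneous (m + Finsupp.single j 1).degree)
    (hdeg : (degRevLex σ).degree p = m + Finsupp.single j 1) :
    p.modMonomial (Finsupp.single j 1) ∈ Ideal.span (X '' Set.Ioi j) := by
  classical
  refine mem_ideal_span_X_image.2 fun a ha => ?_
  have haj : a j = 0 := by
    by_contra hne
    refine mem_support_iff.1 ha (coeff_modMonomial_of_le _ ?_)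
    rwa [Finsupp.single_le_iff, Nat.one_le_iff_ne_zero]
  have hap : coeff a p ≠ 0 := by
    rwa [mem_support_iff, coeff_modMonomial_of_not_le] at ha
    simp [haj]
  have hdega : a.degree = (m + Finsupp.single j 1).degree := by
    by_contra hne
    exact hap (hp.coeff_eq_zero hne)
  have hne : a ≠ m + Finsupp.single j 1 := by
    rintro rfl
    simp at haj
  have hlt := ((degRevLex σ).le_degree (mem_support_iff.2 hap)).lt_of_ne
    ((degRevLex σ).toSyn.injective.ne (hdeg ▸ hne))
  rw [hdeg, degRevLex_lt_iff] at hlt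
  obtain h | ⟨-, i, hi, heq⟩ := hlt
  · exact absurd hdega h.ne
  refine ⟨i, lt_of_not_ge fun hij => ?_, hi.ne_bot⟩
  rcases hij.lt_or_eq with hij | rfl
  · simp [heq j hij] at haj
  · rw [haj] at hi
    exact Nat.not_lt_zero _ hi

/-- Bayer and Stillman's criterion for `x_j` to be regular modulo `I` and the later variables. -/
theorem forall_mem_of_X_mul_mem_iff {K : Type*} [Field K] {I : Ideal (MvPolynomial σ K)}
    (hI : I.IsHomogeneous (homogeneousSubmodule σ K)) (j : σ) :
    (∀ f, X j * f ∈ I ⊔ Ideal.span (X '' Set.Ioi j) → f ∈ I ⊔ Ideal.span (X '' Set.Ioi j)) ↔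
      ∀ m : σ →₀ ℕ, (∀ l ∈ Set.Ioi j, m l = 0) →
        m + Finsupp.single j 1 ∈ leadExps (degRevLex σ) I → m ∈ leadExps (degRevLex σ) I := by
  classical
  set J : Ideal (MvPolynomial σ K) := Ideal.span (X '' Set.Ioi j)
  constructor
  · intro h m hm hmj
    obtain ⟨p, hp, hp0, hhom, hdeg⟩ := exists_isHomogeneous_of_mem_leadExps hI hmj
    have hdiv : p.divMonomial (Finsupp.single j 1) ∈ I ⊔ J := by
      refine h _ ?_
      rw [← add_sub_cancel_right (X j * _) (p.modMonomial (Finsupp.single j 1)),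
        divMonomial_add_modMonomial_single]
      exact Ideal.sub_mem _ (Ideal.mem_sup_left hp)
        (Ideal.mem_sup_right (modMonomial_single_mem_span_X hhom hdeg))
    refine mem_leadExps_of_mem_leadExps_sup hI (isUpperSet_Ioi j) hm
      (mem_leadExps_of_forall_mem_support hdiv ?_ fun a ha => ?_)
    · rw [mem_support_iff, coeff_divMonomial, add_comm, ← hdeg]
      exact (degRevLex σ).coeff_degree_ne_zero_iff.2 hp0
    · rw [mem_support_iff, coeff_divMonomial, ← mem_support_iff] at ha
      have hle := (degRevLex σ).le_degree ha
      rwa [hdeg, add_comm, map_add, map_add, add_le_add_iff_right] at hle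
  · intro h f hf
    refine mem_of_mul_mem_of_leadExps (mo := degRevLex σ) (X_ne_zero j) (fun m hm => ?_) hf
    rw [MonomialOrder.degree_X] at hm
    by_cases hmj : ∀ l ∈ Set.Ioi j, m l = 0
    · refine leadExps_mono le_sup_left (h m hmj
        (mem_leadExps_of_mem_leadExps_sup hI (isUpperSet_Ioi j) (fun l hl => ?_) hm))
      rw [Finsupp.add_apply, hmj l hl, Finsupp.single_eq_of_ne (ne_of_gt hl), add_zero]
    · push Not at hmj
      obtain ⟨l, hl, hml⟩ := hmj
      refine monomial_mem_leadExps (Ideal.mem_sup_right (mem_ideal_span_X_image.2 fun a ha => ?_))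
      rw [Finset.mem_singleton.1 (support_monomial_subset ha)]
      exact ⟨l, hl, hml⟩

end BayerStillman

section MinimalGenerators

variable {σ : Type*} [LinearOrder σ] [Finite σ] {L : Set (σ →₀ ℕ)} {T : Set σ}

lemma forall_minimal_apply_eq_zero_iff (hL : IsUpperSet L) (hT : IsUpperSet T) :
    (∀ m, Minimal (· ∈ L) m → ∀ i ∈ T, m i = 0) ↔
      ∀ j ∈ T, ∀ m : σ →₀ ℕ, (∀ l ∈ Set.Ioi j, m l = 0) → m + Finsupp.single j 1 ∈ L → m ∈ L := by
  classical
  constructor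
  · intro h j hj m _ hmj
    obtain ⟨m', hle, hmin⟩ := exists_minimal_le_of_wellFoundedLT (· ∈ L) _ hmj
    refine hL (fun i => ?_) hmin.prop
    rcases eq_or_ne i j with rfl | hij
    · simp [h m' hmin i hj]
    · simpa [Finsupp.single_eq_of_ne hij] using hle i
  · intro h m hmin i hi
    by_contra hne
    have hsupp : m.support.Nonempty := ⟨i, Finsupp.mem_support_iff.2 hne⟩
    set j := m.support.max' hsupp
    have hj : m j ≠ 0 := Finsupp.mem_support_iff.1 (m.support.max'_mem hsupp)
    have hij : i ≤ j := m.support.le_max' i (Finsupp.mem_support_iff.2 hne)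
    have hsub : m - Finsupp.single j 1 + Finsupp.single j 1 = m :=
      tsub_add_cancel_of_le (Finsupp.single_le_iff.2 (Nat.one_le_iff_ne_zero.2 hj))
    have hmem : m - Finsupp.single j 1 ∈ L := by
      refine h j (hT hij hi) _ (fun l hl => ?_) (hsub.symm ▸ hmin.prop)
      have hml : m l = 0 := by
        by_contra hl0
        exact (m.support.le_max' l (Finsupp.mem_support_iff.2 hl0)).not_gt hl
      simp [hml]
    have hle : m j ≤ m j - 1 := by
      simpa only [Finsupp.tsub_apply, Finsupp.single_eq_same] using
        hmin.le_of_le hmem tsub_le_self j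
    omega

lemma exists_antichain_upperClosure_eq_iff {α : Type*} [PartialOrder α] [WellFoundedLT α]
    {L : Set α} (hL : IsUpperSet L) (P : α → Prop) :
    (∃ G : Set α, (∀ m ∈ G, P m) ∧ (upperClosure G : Set α) = L ∧ IsAntichain (· ≤ ·) G) ↔
      ∀ m, Minimal (· ∈ L) m → P m := by
  constructor
  · rintro ⟨G, hP, rfl, hG⟩ m hm
    exact hP m (hG.minimal_mem_upperClosure_iff_mem.1 hm)
  · refine fun h => ⟨{m | Minimal (· ∈ L) m}, h, Set.Subset.antisymm ?_ fun m hm => ?_,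
      setOfPred_minimal_antichain _⟩
    · exact upperClosure_min (fun m hm => hm.prop) hL
    · obtain ⟨m', hle, hm'⟩ := exists_minimal_le_of_wellFoundedLT (· ∈ L) m hm
      exact mem_upperClosure.2 ⟨m', hm', hle⟩

variable {k : Type} [Field k] {N : ℕ}

lemma exists_minimal_generators_iff (I : Ideal (MvPolynomial (Fin N) k))
    (P : (Fin N →₀ ℕ) → Prop) :
    (∃ G : Set (Fin N →₀ ℕ), (∀ m ∈ G, P m) ∧
      initialIdeal k I = Ideal.span ((fun m => monomial m (1 : k)) '' G) ∧
      ∀ m ∈ G, monomial m (1 : k) ∉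
        Ideal.span ((fun m' => monomial m' (1 : k)) '' (G \ {m}))) ↔
      ∀ m, Minimal (· ∈ leadExps (degRevLex (Fin N)) I) m → P m := by
  rw [← exists_antichain_upperClosure_eq_iff isUpperSet_leadExps]
  refine exists_congr fun G => and_congr_right fun _ => and_congr ?_ ?_
  · rw [initialIdeal_eq_span, span_monomial_image_eq_iff, SetLike.ext'_iff,
      isUpperSet_leadExps.upperClosure, eq_comm]
  · simp only [monomial_mem_span_monomial_image, IsAntichain, Set.Pairwise]
    constructor
    · exact fun h a ha b hb hab hle => h b hb ⟨a, ⟨ha, hab⟩, hle⟩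
    · exact fun h m hm ⟨m', ⟨hm', hne⟩, hle⟩ => h hm' hm hne hle

end MinimalGenerators

section VariableSequences

open RingTheory.Sequence

variable {B : Type*} [CommRing B]

lemma isWeaklyRegular_map_iff {ι : Type*} [LinearOrder ι] (z : ι → B) {L : List ι}
    (hL : L.SortedGT) :
    IsWeaklyRegular B (L.map z) ↔
      ∀ j ∈ L, ∀ b, z j * b ∈ Ideal.span (z '' {l | l ∈ L ∧ j < l}) →
        b ∈ Ideal.span (z '' {l | l ∈ L ∧ j < l}) := by
  induction L using List.reverseRecOn with
  | nil => simp
  | append_singleton L j ih =>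
    have hLj : ∀ l ∈ L, j < l := fun l hl =>
      (List.pairwise_append.1 hL.pairwise).2.2 l hl j (List.mem_singleton_self j)
    have hj : {l | l ∈ L ++ [j] ∧ j < l} = {l | l ∈ L} := by
      ext l
      have := hLj l
      grind
    have hi : ∀ i ∈ L, {l | l ∈ L ++ [j] ∧ i < l} = {l | l ∈ L ∧ i < l} := fun i hi => by
      ext l
      have := hLj i hi
      grind
    have hideal : Ideal.ofList (L.map z) = Ideal.span (z '' {l | l ∈ L}) := by
      rw [Ideal.ofList]
      congr 1
      ext b
      simp
    rw [List.map_append, isWeaklyRegular_append_iff,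
      ih (List.pairwise_append.1 hL.pairwise).1.sortedGT]
    rw [List.forall_mem_append, List.forall_mem_singleton]
    refine and_congr (forall₂_congr fun i hiL => by rw [hi i hiL]) ?_
    rw [hj, List.map_singleton, isWeaklyRegular_singleton_iff,
      isSMulRegular_quotient_iff_mem_of_smul_mem, smul_eq_mul, Ideal.mul_top, hideal]
    rfl

variable {N : ℕ}

/-- The indices `N - 1, …, e` of the last variables, in decreasing order. -/
def lastIndices (N e : ℕ) : List (Fin N) :=
  (Finset.univ.filter fun i : Fin N => e ≤ (i : ℕ)).sort (· ≥ ·)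

lemma mem_lastIndices {e : ℕ} {i : Fin N} : i ∈ lastIndices N e ↔ e ≤ (i : ℕ) := by
  simp [lastIndices]

lemma sortedGT_lastIndices (N e : ℕ) : (lastIndices N e).SortedGT :=
  Finset.sortedGT_sort _

lemma length_lastIndices {c e : ℕ} (h : c + e = N) : (lastIndices N e).length = c := by
  have hcard :=
    Finset.card_filter_add_card_filter_not (s := Finset.univ) fun i : Fin N => (i : ℕ) < e
  simp only [not_lt, Fin.card_filter_val_lt, Finset.card_univ, Fintype.card_fin] at hcard
  rw [lastIndices, Finset.length_sort]
  omega

lemma setOf_mem_lastIndices_lt {e : ℕ} {j : Fin N} (hj : e ≤ (j : ℕ)) :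
    {l | l ∈ lastIndices N e ∧ j < l} = Set.Ioi j :=
  Set.ext fun _ => ⟨fun h => h.2, fun h => ⟨mem_lastIndices.2 (hj.trans (le_of_lt h)), h⟩⟩

end VariableSequences

section Localization

open RingTheory.Sequence IsLocalRing

variable {R : Type*} [CommRing R] (P : Ideal R) [P.IsPrime]

lemma isMultiplicitySystem_localization {ys : List R}
    (h : ∀ Q : Ideal R, Q.IsPrime → Q ≤ P → (∀ y ∈ ys, y ∈ Q) → Q = P) :
    IsMultiplicitySystem (Localization.AtPrime P)
      (ys.map (algebraMap R (Localization.AtPrime P))) := by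
  rintro p ⟨-, hp⟩
  have hcomap : p.asIdeal.comap (algebraMap R (Localization.AtPrime P)) = P := by
    refine h _ (Ideal.comap_isPrime _ _) (fun x hx => ?_) fun y hy => ?_
    · rw [← IsLocalization.AtPrime.to_map_mem_maximal_iff (Localization.AtPrime P) P x]
      exact le_maximalIdeal p.isPrime.ne_top hx
    · exact hp (List.mem_map_of_mem hy)
  refine PrimeSpectrum.ext ((le_maximalIdeal p.isPrime.ne_top).antisymm ?_)
  rw [← IsLocalization.AtPrime.map_eq_maximalIdeal P, Ideal.map_le_iff_le_comap]
  exact hcomap.ge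

lemma isWeaklyRegular_localization [IsNoetherianRing R] {rs ys : List R}
    (hrs : IsRegular R rs) (hrsP : ∀ r ∈ rs, r ∈ P) (hlen : ys.length = rs.length)
    (hysP : ∀ y ∈ ys, y ∈ P)
    (h : ∀ Q : Ideal R, Q.IsPrime → Q ≤ P → (∀ y ∈ ys, y ∈ Q) → Q = P) :
    IsWeaklyRegular (Localization.AtPrime P)
      (ys.map (algebraMap R (Localization.AtPrime P))) := by
  have : IsNoetherianRing (Localization.AtPrime P) :=
    IsLocalization.isNoetherianRing P.primeCompl _ inferInstance
  have hmem : ∀ {l : List R}, (∀ x ∈ l, x ∈ P) →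
      ∀ y ∈ l.map (algebraMap R (Localization.AtPrime P)), y ∈ maximalIdeal _ := by
    intro l hl y hy
    obtain ⟨x, hx, rfl⟩ := List.mem_map.1 hy
    exact (IsLocalization.AtPrime.to_map_mem_maximal_iff _ P x).2 (hl x hx)
  refine (isMultiplicitySystem_localization P h).isWeaklyRegular (hmem hysP) ⟨_, ?_, hmem hrsP,
    hrs.toIsWeaklyRegular.isRegular_of_isLocalization_of_mem _ P hrsP⟩
  rw [List.length_map, List.length_map, hlen]

lemma exists_notMem_mul_mem_of_isWeaklyRegular_localization {ι : Type*} [LinearOrder ι]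
    {z : ι → R} {L : List ι} (hL : L.SortedGT)
    (h : IsWeaklyRegular (Localization.AtPrime P)
      ((L.map z).map (algebraMap R (Localization.AtPrime P))))
    {j : ι} (hj : j ∈ L) {b : R} (hb : z j * b ∈ Ideal.span (z '' {l | l ∈ L ∧ j < l})) :
    ∃ s ∉ P, s * b ∈ Ideal.span (z '' {l | l ∈ L ∧ j < l}) := by
  rw [List.map_map, isWeaklyRegular_map_iff _ hL] at h
  have hb' := h j hj (algebraMap R _ b)
  rw [Set.image_comp, ← Ideal.map_span, Function.comp_apply, ← map_mul] at hb'
  exact (IsLocalization.algebraMap_mem_map_algebraMap_iff P.primeCompl _ _ _).1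
    (hb' (Ideal.mem_map_of_mem _ hb))

end Localization

section HomogeneousIdeals

attribute [local instance] MvPolynomial.gradedAlgebra

variable {σ K : Type*} [Field K]

lemma idealOfVars_eq_ker_constantCoeff {R : Type*} [CommRing R] :
    idealOfVars σ R = RingHom.ker (constantCoeff : MvPolynomial σ R →+* R) := by
  ext p
  rw [← pow_one (idealOfVars σ R), mem_pow_idealOfVars_iff', RingHom.mem_ker, constantCoeff_eq]
  simp [Finsupp.degree_eq_zero_iff]

instance : (idealOfVars σ K).IsMaximal := by
  rw [idealOfVars_eq_ker_constantCoeff]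
  exact RingHom.ker_isMaximal_of_surjective _ fun c => ⟨C c, constantCoeff_C σ c⟩

variable {I : Ideal (MvPolynomial σ K)}

lemma le_idealOfVars (hI : I.IsHomogeneous (homogeneousSubmodule σ K)) (hne : I ≠ ⊤) :
    I ≤ idealOfVars σ K := by
  intro f hf
  rw [idealOfVars_eq_ker_constantCoeff, RingHom.mem_ker, constantCoeff_eq]
  by_contra h0
  have hC : C (coeff 0 f) ∈ I := by
    rw [← homogeneousComponent_zero]
    exact homogeneousComponent_mem_of_mem hI hf 0
  exact hne (I.eq_top_of_isUnit_mem hC ((isUnit_iff_ne_zero.2 h0).map C))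

lemma isHomogeneous_sup_span_X {R : Type*} [CommRing R] {I : Ideal (MvPolynomial σ R)}
    (hI : I.IsHomogeneous (homogeneousSubmodule σ R)) (s : Set σ) :
    (I ⊔ Ideal.span (X '' s)).IsHomogeneous (homogeneousSubmodule σ R) := by
  refine hI.sup (Ideal.homogeneous_span _ _ ?_)
  rintro _ ⟨i, -, rfl⟩
  exact ⟨1, isHomogeneous_X R i⟩

lemma mem_of_mul_mem_of_notMem_idealOfVars (hI : I.IsHomogeneous (homogeneousSubmodule σ K))
    {u f : MvPolynomial σ K} (hu : u ∉ idealOfVars σ K) (h : u * f ∈ I) : f ∈ I := by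
  obtain ⟨y, v, hv, hyv⟩ := Ideal.IsMaximal.exists_inv inferInstance hu
  refine (mem_iff_homogeneousComponent_mem hI f).2 fun d => ?_
  -- Modulo `I`, `f` is `v * f`, hence `v ^ (d + 1) * f`, which has no component of degree `d`.
  have hsub : f - v ^ (d + 1) * f ∈ I := by
    have hdvd : y * u ∣ 1 - v ^ (d + 1) := by
      rw [eq_sub_of_add_eq hyv]
      exact one_sub_dvd_one_sub_pow v (d + 1)
    rw [← one_sub_mul]
    refine I.mem_of_dvd (mul_dvd_mul_right hdvd f) ?_
    rw [mul_assoc]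
    exact I.mul_mem_left y h
  have hzero : homogeneousComponent d (v ^ (d + 1) * f) = 0 :=
    homogeneousComponent_eq_zero' _ _ fun a ha hda => Nat.not_succ_le_self d <|
      hda ▸ (mem_pow_idealOfVars_iff (d + 1) _).1
        (Ideal.mul_mem_right f _ (Ideal.pow_mem_pow hv (d + 1))) a ha
  rw [← sub_add_cancel f (v ^ (d + 1) * f), map_add, hzero, add_zero]
  exact homogeneousComponent_mem_of_mem hI hsub d

lemma isMaximal_of_forall_map_X_mem {R : Type*} [CommRing R] {φ : MvPolynomial σ K →+* R}
    (hφ : φ.Finite) (Q : Ideal R) [Q.IsPrime] (hQ : ∀ i, φ (X i) ∈ Q) : Q.IsMaximal := by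
  refine Ideal.isMaximal_of_isIntegral_of_isMaximal_comap' φ hφ.to_isIntegral Q ?_
  have hle : idealOfVars σ K ≤ Q.comap φ := by
    refine Ideal.span_le.2 ?_
    rintro _ ⟨i, rfl⟩
    exact hQ i
  have hmax : (idealOfVars σ K).IsMaximal := inferInstance
  rw [← hmax.eq_of_le (Ideal.comap_ne_top _ (Ideal.IsPrime.ne_top ‹_›)) hle]
  exact hmax

end HomogeneousIdeals

section CohenMacaulay

open RingTheory.Sequence

attribute [local instance] MvPolynomial.gradedAlgebra

variable {k : Type} [Field k] {N c e : ℕ} {I : Ideal (MvPolynomial (Fin N) k)}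

lemma idealHomog_iff :
    IdealHomog k I ↔ I.IsHomogeneous (homogeneousSubmodule (Fin N) k) :=
  ⟨fun h d f hf => (decomposition.decompose'_apply f d).symm ▸ h f hf d,
    fun h _ hf => homogeneousComponent_mem_of_mem h hf⟩

lemma irrelevantIdeal_eq_map (I : Ideal (MvPolynomial (Fin N) k)) :
    irrelevantIdeal k I = (idealOfVars (Fin N) k).map (Ideal.Quotient.mk I) := by
  rw [idealOfVars, Ideal.map_span, ← Set.range_comp]
  rfl

lemma isPrime_irrelevantIdeal (hI : I.IsHomogeneous (homogeneousSubmodule (Fin N) k))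
    (hne : I ≠ ⊤) : (irrelevantIdeal k I).IsPrime := by
  rw [irrelevantIdeal_eq_map]
  refine Ideal.map_isPrime_of_surjective Ideal.Quotient.mk_surjective ?_
  rw [Ideal.mk_ker]
  exact le_idealOfVars hI hne

/-- The images of the last variables `x_{N-1}, …, x_e` in `S₀/I`, in this order. -/
noncomputable def lastVars (e : ℕ) (I : Ideal (MvPolynomial (Fin N) k)) :
    List (MvPolynomial (Fin N) k ⧸ I) :=
  (lastIndices N e).map fun i => Ideal.Quotient.mk I (X i)

lemma mem_irrelevantIdeal_of_mem_lastVars {x : MvPolynomial (Fin N) k ⧸ I}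
    (hx : x ∈ lastVars e I) : x ∈ irrelevantIdeal k I := by
  obtain ⟨i, -, rfl⟩ := List.mem_map.1 hx
  exact Ideal.subset_span ⟨i, rfl⟩

lemma mk_mem_span_image_iff {R : Type*} [CommRing R] {I : Ideal R} {ι : Type*} {x : ι → R}
    {s : Set ι} {f : R} :
    Ideal.Quotient.mk I f ∈ Ideal.span ((fun i => Ideal.Quotient.mk I (x i)) '' s) ↔
      f ∈ I ⊔ Ideal.span (x '' s) := by
  rw [← Function.comp_def, Set.image_comp, ← Ideal.map_span, Ideal.mem_quotient_iff_mem_sup,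
    sup_comm]

lemma isWeaklyRegular_lastVars_iff :
    IsWeaklyRegular (MvPolynomial (Fin N) k ⧸ I) (lastVars e I) ↔
      ∀ j : Fin N, e ≤ (j : ℕ) → ∀ f, X j * f ∈ I ⊔ Ideal.span (X '' Set.Ioi j) →
        f ∈ I ⊔ Ideal.span (X '' Set.Ioi j) := by
  rw [lastVars, isWeaklyRegular_map_iff _ (sortedGT_lastIndices N e)]
  simp only [mem_lastIndices]
  refine forall₂_congr fun j hj => ?_
  rw [Ideal.Quotient.mk_surjective.forall]
  simp only [← mk_mem_span_image_iff, map_mul, ← mem_lastIndices, setOf_mem_lastIndices_lt hj]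

lemma exists_notMem_mul_mem_of_isCMQuot (hce : c + e = N)
    (hI : I.IsHomogeneous (homogeneousSubmodule (Fin N) k)) (hne : I ≠ ⊤)
    (hfin : (nnMap k e I).toRingHom.Finite) (hCM : IsCMQuot k I c) {j : Fin N} (hj : e ≤ (j : ℕ))
    {f : MvPolynomial (Fin N) k} (hf : X j * f ∈ I ⊔ Ideal.span (X '' Set.Ioi j)) :
    ∃ u ∉ idealOfVars (Fin N) k, u * f ∈ I ⊔ Ideal.span (X '' Set.Ioi j) := by
  have := isPrime_irrelevantIdeal hI hne
  obtain ⟨rs, hlen, hrs, hreg⟩ := hCM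
  have hloc := isWeaklyRegular_localization (irrelevantIdeal k I) hreg hrs (ys := lastVars e I)
    (by rw [lastVars, List.length_map, length_lastIndices hce, hlen])
    (fun _ => mem_irrelevantIdeal_of_mem_lastVars) fun Q hQ hle hmem => by
      have hmax : Q.IsMaximal := isMaximal_of_forall_map_X_mem hfin Q fun i => by
        refine hmem _ (List.mem_map.2 ⟨i, mem_lastIndices.2 i.2, ?_⟩)
        exact (aeval_X (fun i : {i : Fin N // e ≤ (i : ℕ)} => Ideal.Quotient.mk I (X i.1)) i).symm
      exact hmax.eq_of_le this.ne_top hle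
  have hset := setOf_mem_lastIndices_lt hj
  rw [← mk_mem_span_image_iff, ← hset, map_mul] at hf
  obtain ⟨s, hs, hsf⟩ := exists_notMem_mul_mem_of_isWeaklyRegular_localization _
    (sortedGT_lastIndices N e) hloc (mem_lastIndices.2 hj) hf
  obtain ⟨u, rfl⟩ := Ideal.Quotient.mk_surjective s
  refine ⟨u, fun hu => hs ?_, ?_⟩
  · rw [irrelevantIdeal_eq_map]
    exact Ideal.mem_map_of_mem _ hu
  · rwa [← map_mul, hset, mk_mem_span_image_iff] at hsf

theorem isCMQuot_iff_isWeaklyRegular_lastVars (hce : c + e = N)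
    (hI : I.IsHomogeneous (homogeneousSubmodule (Fin N) k)) (hne : I ≠ ⊤)
    (hfin : (nnMap k e I).toRingHom.Finite) :
    IsCMQuot k I c ↔ IsWeaklyRegular (MvPolynomial (Fin N) k ⧸ I) (lastVars e I) := by
  constructor
  · refine fun hCM => isWeaklyRegular_lastVars_iff.2 fun j hj f hf => ?_
    obtain ⟨u, hu, huf⟩ := exists_notMem_mul_mem_of_isCMQuot hce hI hne hfin hCM hj hf
    exact mem_of_mul_mem_of_notMem_idealOfVars (isHomogeneous_sup_span_X hI _) hu huf
  · refine fun hreg => ⟨lastVars e I, by rw [lastVars, List.length_map, length_lastIndices hce],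
      fun _ => mem_irrelevantIdeal_of_mem_lastVars, hreg, fun htop => ?_⟩
    refine (isPrime_irrelevantIdeal hI hne).ne_top (top_le_iff.1 ?_)
    rw [htop, smul_eq_mul, Ideal.mul_top]
    exact Ideal.span_le.2 fun _ => mem_irrelevantIdeal_of_mem_lastVars

theorem _root_.stmt5_general (hce : c + e = N) (hIhom : IdealHomog k I) (hproper : I ≠ ⊤)
    (hfin : (nnMap k e I).toRingHom.Finite) :
    IsCMQuot k I c ↔
      ∃ G : Set (Fin N →₀ ℕ),
        (∀ m ∈ G, ∀ i : Fin N, e ≤ (i : ℕ) → m i = 0) ∧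
        initialIdeal k I = Ideal.span ((fun m => monomial m (1 : k)) '' G) ∧
        ∀ m ∈ G, monomial m (1 : k) ∉
          Ideal.span ((fun m' => monomial m' (1 : k)) '' (G \ {m})) := by
  have hI := idealHomog_iff.1 hIhom
  have htail : IsUpperSet {i : Fin N | e ≤ (i : ℕ)} := fun _ _ hij hi => le_trans (α := ℕ) hi hij
  calc IsCMQuot k I c
      ↔ IsWeaklyRegular (MvPolynomial (Fin N) k ⧸ I) (lastVars e I) :=
        isCMQuot_iff_isWeaklyRegular_lastVars hce hI hproper hfin
    _ ↔ ∀ j : Fin N, e ≤ (j : ℕ) → ∀ f, X j * f ∈ I ⊔ Ideal.span (X '' Set.Ioi j) →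
          f ∈ I ⊔ Ideal.span (X '' Set.Ioi j) := isWeaklyRegular_lastVars_iff
    _ ↔ ∀ j : Fin N, e ≤ (j : ℕ) → ∀ m : Fin N →₀ ℕ, (∀ l ∈ Set.Ioi j, m l = 0) →
          m + Finsupp.single j 1 ∈ leadExps (degRevLex (Fin N)) I →
            m ∈ leadExps (degRevLex (Fin N)) I :=
        forall₂_congr fun j _ => forall_mem_of_X_mul_mem_iff hI j
    _ ↔ ∀ m, Minimal (· ∈ leadExps (degRevLex (Fin N)) I) m →
          ∀ i : Fin N, e ≤ (i : ℕ) → m i = 0 :=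
        (forall_minimal_apply_eq_zero_iff isUpperSet_leadExps htail).symm
    _ ↔ _ := (exists_minimal_generators_iff I _).symm

end CohenMacaulay

end Paper

/-- Proposition 2.5 (Bermejo-Gimenez): `R = S₀/I` is Cohen-Macaulay iff the initial ideal
`in(I)` w.r.t. degrevlex is minimally generated by monomials in `x_0, …, x_{e-1}` only. -/
theorem stmt5 (k : Type) [Field k] [Infinite k] (n e : ℕ) (he : 0 < e)
    (I : Ideal (MvPolynomial (Fin (n + e + 1)) k))
    (hIhom : Paper.IdealHomog k I) (hproper : I ≠ ⊤)
    (hNN : Paper.IsNoetherNormalization k e I) :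
    Paper.IsCMQuot k I (n + 1) ↔
      ∃ G : Set (Fin (n + e + 1) →₀ ℕ),
        (∀ m ∈ G, ∀ i : Fin (n + e + 1), e ≤ (i : ℕ) → m i = 0) ∧
        Paper.initialIdeal k I =
          Ideal.span ((fun m => (MvPolynomial.monomial m (1 : k))) '' G) ∧
        (∀ m ∈ G, (MvPolynomial.monomial m (1 : k)) ∉
          Ideal.span ((fun m' => (MvPolynomial.monomial m' (1 : k))) '' (G \ {m}))) :=
  stmt5_general (by omega) hIhom hproper hNN.2
end

section
/- Let $X \subseteq \mathbb{P}^{n+e}$ be a non-degenerate closed subscheme of dimension $n$, codimension $e$, and reduction number $r$. Then $\deg(X) \le \binom{e+r}{r}$. -/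
set_option synthInstance.maxHeartbeats 1000000
set_option maxHeartbeats 2000000

/-!
Let `V = R₁`. If `U ⊆ V` is spanned by a reduction then `V ^ (r + 1) = U * V ^ r`, hence
`R_d = U ^ (d - r) * V ^ r` for `d ≥ r`. Write `V = U ⊔ Z` with `dim U ≤ n + 1` and `dim Z ≤ e`, and
expand: `R_d` is the sum of the subspaces `U ^ (d - j) * Z ^ j` for `j ≤ r`, so its dimension is at
most `∑_{j ≤ r} C(e + j - 1, j) * C(n + d, n) = C(e + r, r) * C(n + d, n)`. Comparing leading
coefficients in `d` bounds the degree.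

A reduction by `n + 1` linear forms has to exist, since otherwise `redNumAll` is `0`, the infimum of
the empty set. While a space `W` of linear forms has dimension at least `n + 2`, the growth of the
Hilbert function forces a homogeneous relation `F` among its basis. A point `a` with `F a ≠ 0`
defines a functional on `W`; modulo its kernel `H` each `x` in `W` is a scalar multiple of one
element `w`, so `F` becomes `F a • w ^ d = 0`. Thus `W` lies in the radical of the ideal generated
by the hyperplane `H`.
-/

namespace Paper

section Asymptotics

open Filter Polynomial

variable {𝕜 : Type*} [NormedField 𝕜] [LinearOrder 𝕜] [IsStrictOrderedRing 𝕜] [Archimedean 𝕜]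
  [OrderTopology 𝕜]

theorem leadingCoeff_nonneg_of_eventually_eval_nonneg {p : 𝕜[X]}
    (h : ∀ᶠ d : ℕ in atTop, 0 ≤ p.eval (d : 𝕜)) : 0 ≤ p.leadingCoeff := by
  by_contra! hneg
  have hdeg : 0 < (X * p).degree := by
    rw [← natDegree_pos_iff_degree_pos, natDegree_X_mul (leadingCoeff_ne_zero.mp hneg.ne)]
    exact Nat.succ_pos _
  have hlead : (X * p).leadingCoeff ≤ 0 := by
    rw [leadingCoeff_mul, leadingCoeff_X, one_mul]
    exact hneg.le
  have hlim : Tendsto (fun d : ℕ => (X * p).eval (d : 𝕜)) atTop atBot :=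
    (tendsto_atBot_of_leadingCoeff_nonpos (X * p) hdeg hlead).comp
      (tendsto_natCast_atTop_atTop (R := 𝕜))
  obtain ⟨d, hd, hd'⟩ := (h.and (hlim.eventually_lt_atBot 0)).exists
  rw [eval_mul, eval_X] at hd'
  exact hd'.not_ge (mul_nonneg d.cast_nonneg hd)

theorem coeff_le_coeff_of_eventually_eval_le {p q : 𝕜[X]} {n : ℕ} (hp : p.natDegree ≤ n)
    (hq : q.natDegree ≤ n) (h : ∀ᶠ d : ℕ in atTop, p.eval (d : 𝕜) ≤ q.eval (d : 𝕜)) :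
    p.coeff n ≤ q.coeff n := by
  have hlead : 0 ≤ (q - p).leadingCoeff :=
    leadingCoeff_nonneg_of_eventually_eval_nonneg (h.mono fun d hd => by simpa using hd)
  rw [← sub_nonneg, ← coeff_sub]
  obtain hlt | heq := (natDegree_sub_le_of_le hq hp).lt_or_eq
  · rw [max_self] at hlt
    exact (coeff_eq_zero_of_natDegree_lt hlt).ge
  · rw [max_self] at heq
    simpa only [leadingCoeff, heq] using hlead

end Asymptotics

section Multichoose

theorem multichoose_mono_left {a b : ℕ} (h : a ≤ b) (d : ℕ) :
    a.multichoose d ≤ b.multichoose d := by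
  rw [Nat.multichoose_eq, Nat.multichoose_eq]
  exact Nat.choose_le_choose d (by omega)

theorem multichoose_succ_left (n d : ℕ) : (n + 1).multichoose d = (d + n).choose n := by
  rw [Nat.multichoose_eq, add_right_comm, Nat.add_sub_cancel, add_comm, Nat.choose_symm_add]

theorem multichoose_succ_mono_right (n : ℕ) : Monotone (n + 1).multichoose := fun a b h => by
  rw [multichoose_succ_left, multichoose_succ_left]
  exact Nat.choose_le_choose n (by omega)

theorem eval_preHilbertPoly_zero (n d : ℕ) :
    (Polynomial.preHilbertPoly ℚ n 0).eval (d : ℚ) = (n + 1).multichoose d := by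
  rw [Polynomial.preHilbertPoly_eq_choose_sub_add ℚ n d.zero_le, Nat.sub_zero,
    multichoose_succ_left]

end Multichoose

section LinearAlgebra

open Module

variable {K M : Type*} [DivisionRing K] [AddCommGroup M] [Module K M]

theorem exists_le_le_finrank_eq {U V : Submodule K M} [FiniteDimensional K V] (hUV : U ≤ V)
    {m : ℕ} (hU : finrank K U ≤ m) (hV : m ≤ finrank K V) :
    ∃ W, U ≤ W ∧ W ≤ V ∧ finrank K W = m := by
  induction m, hU using Nat.le_induction with
  | base => exact ⟨U, le_rfl, hUV, rfl⟩
  | succ m _ ih =>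
    obtain ⟨W, hUW, hWV, hW⟩ := ih (Nat.le_of_succ_le hV)
    obtain ⟨v, hvV, hvW⟩ : ∃ v ∈ V, v ∉ W := by
      refine SetLike.exists_of_lt (hWV.lt_of_ne ?_)
      rintro rfl
      omega
    have : FiniteDimensional K W := Submodule.finiteDimensional_of_le hWV
    refine ⟨W ⊔ Submodule.span K {v}, hUW.trans le_sup_left,
      sup_le hWV ((Submodule.span_singleton_le_iff_mem v V).mpr hvV), le_antisymm ?_ ?_⟩
    · refine (Submodule.finrank_add_le_finrank_add_finrank _ _).trans ?_
      exact add_le_add hW.le (finrank_span_singleton fun h => hvW (by rw [h]; exact W.zero_mem)).le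
    · rw [← hW]
      exact Submodule.finrank_lt_finrank_of_lt (left_lt_sup.mpr fun h =>
        hvW (h (Submodule.mem_span_singleton_self v)))

theorem exists_sup_eq_of_finrank_le_add {U V : Submodule K M} [FiniteDimensional K V]
    (hUV : U ≤ V) {m e : ℕ} (hU : finrank K U ≤ m) (hV : finrank K V ≤ m + e) :
    ∃ W Z, U ≤ W ∧ W ⊔ Z = V ∧ finrank K W ≤ m ∧ finrank K Z ≤ e := by
  obtain ⟨W, hUW, hWV, hW⟩ := exists_le_le_finrank_eq hUV
    (le_min hU (Submodule.finrank_mono hUV)) (min_le_right m (finrank K V))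
  obtain ⟨C, hC⟩ := exists_isCompl W
  have hsup : W ⊔ C ⊓ V = V := by
    rw [← sup_inf_assoc_of_le C hWV, hC.sup_eq_top, top_inf_eq]
  have hinf : W ⊓ (C ⊓ V) = ⊥ := by rw [← inf_assoc, hC.inf_eq_bot, bot_inf_eq]
  have : FiniteDimensional K W := Submodule.finiteDimensional_of_le hWV
  have : FiniteDimensional K (C ⊓ V : Submodule K M) :=
    Submodule.finiteDimensional_of_le inf_le_right
  have hadd := Submodule.finrank_sup_add_finrank_inf_eq W (C ⊓ V)
  rw [hsup, hinf, finrank_bot] at hadd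
  exact ⟨W, C ⊓ V, hUW, hsup, by omega, by omega⟩

theorem exists_finset_card_eq_le_span [Infinite K] {W V : Submodule K M} [FiniteDimensional K W]
    (hV : V ≠ ⊥) (hWV : W ≤ V) {m : ℕ} (hW : finrank K W ≤ m) :
    ∃ L : Finset M, (L : Set M) ⊆ V ∧ L.card = m ∧ W ≤ Submodule.span K L := by
  classical
  obtain ⟨v, hvV, hv⟩ := V.exists_mem_ne_zero_of_ne_bot hV
  have hinf : (V : Set M).Infinite :=
    Set.infinite_of_injective_forall_mem (smul_left_injective K hv) fun c => V.smul_mem c hvV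
  have : FiniteDimensional K (Submodule.span K (W : Set M)) := by rwa [Submodule.span_eq]
  obtain ⟨B, hBW, hBcard, hBspan, -⟩ := Submodule.exists_finset_span_eq_linearIndepOn K (W : Set M)
  rw [Submodule.span_eq] at hBcard hBspan
  obtain ⟨E, hEV, hEcard⟩ := (hinf.sdiff B.finite_toSet).exists_subset_card_eq (m - B.card)
  have hdisj : Disjoint B E := Finset.disjoint_right.mpr fun x hx => (hEV hx).2
  refine ⟨B ∪ E, ?_, ?_, ?_⟩
  · rw [Finset.coe_union]
    exact Set.union_subset (hBW.trans hWV) (hEV.trans Set.sdiff_subset)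
  · rw [Finset.card_union_of_disjoint hdisj]
    omega
  · rw [← hBspan, Finset.coe_union]
    exact Submodule.span_mono Set.subset_union_left

end LinearAlgebra

section PowersOfSubspaces

open Module MvPolynomial

variable {K A : Type*} [Field K] [CommRing A] [Algebra K A]

theorem finrank_homogeneousSubmodule (σ : Type*) [Fintype σ] (d : ℕ) :
    finrank K (homogeneousSubmodule σ K d) = (Fintype.card σ).multichoose d := by
  classical
  have hset : {a : σ →₀ ℕ | a.degree = d} =
      ((Finset.univ.finsuppAntidiag d : Finset (σ →₀ ℕ)) : Set (σ →₀ ℕ)) := by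
    ext a
    simp [Finset.mem_finsuppAntidiag, Finsupp.degree_eq_sum]
  rw [homogeneousSubmodule_eq_finsupp_supported,
    (AddMonoidAlgebra.supportedEquivFinsupp {a : σ →₀ ℕ | a.degree = d}).finrank_eq, hset,
    Module.finrank_finsupp_self]
  simp [Finset.card_finsuppAntidiag_nat_eq_multichoose]

instance finiteDimensional_homogeneousSubmodule (σ : Type*) [Finite σ] (d : ℕ) :
    FiniteDimensional K (homogeneousSubmodule σ K d) :=
  Module.Finite.iff_fg.mpr (homogeneousSubmodule_fg σ K d)

theorem map_aeval_homogeneousSubmodule {σ : Type*} (y : σ → A) (d : ℕ) :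
    (homogeneousSubmodule σ K d).map (aeval y).toLinearMap =
      Submodule.span K (Set.range y) ^ d := by
  rw [← homogeneousSubmodule_one_pow, Submodule.map_pow, homogeneousSubmodule_one_eq_span_X,
    Submodule.map_span, ← Set.range_comp]
  congr 3
  funext i
  exact aeval_X y i

theorem span_range_coe_finBasis (U : Submodule K A) [FiniteDimensional K U] :
    Submodule.span K (Set.range fun i => (finBasis K U i : A)) = U := by
  have hmap := Submodule.map_span U.subtype (Set.range (finBasis K U))
  rw [(finBasis K U).span_eq, Submodule.map_subtype_top, ← Set.range_comp] at hmap
  exact hmap.symm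

instance finiteDimensional_pow (U : Submodule K A) [FiniteDimensional K U] (d : ℕ) :
    FiniteDimensional K ↥(U ^ d) :=
  Module.Finite.iff_fg.mpr ((Module.Finite.iff_fg.mp ‹_›).pow d)

instance finiteDimensional_mul (U V : Submodule K A) [FiniteDimensional K U]
    [FiniteDimensional K V] : FiniteDimensional K ↥(U * V) :=
  Module.Finite.iff_fg.mpr ((Module.Finite.iff_fg.mp ‹_›).mul (Module.Finite.iff_fg.mp ‹_›))

theorem finrank_mul_le (U V : Submodule K A) [FiniteDimensional K U] [FiniteDimensional K V] :
    finrank K ↥(U * V) ≤ finrank K U * finrank K V := by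
  rw [← Submodule.mulMap_range, ← finrank_tensorProduct]
  exact LinearMap.finrank_range_le _

theorem finrank_pow_le (U : Submodule K A) [FiniteDimensional K U] (d : ℕ) :
    finrank K ↥(U ^ d) ≤ (finrank K U).multichoose d := by
  conv_lhs => rw [← span_range_coe_finBasis U, ← map_aeval_homogeneousSubmodule]
  refine (Submodule.finrank_map_le _ _).trans ?_
  rw [finrank_homogeneousSubmodule, Fintype.card_fin]

theorem sup_pow_succ_le (U Z : Submodule K A) (r : ℕ) :
    (U ⊔ Z) ^ (r + 1) ≤ U * (U ⊔ Z) ^ r ⊔ Z ^ (r + 1) := by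
  induction r with
  | zero => simp only [zero_add, pow_one, pow_zero, mul_one, le_refl]
  | succ r ih =>
    have hZ : Z * (U * (U ⊔ Z) ^ r) ≤ U * (U ⊔ Z) ^ (r + 1) := by
      rw [mul_left_comm, pow_succ']
      gcongr
      exact le_sup_right
    calc (U ⊔ Z) ^ (r + 1 + 1)
        = U * (U ⊔ Z) ^ (r + 1) ⊔ Z * (U ⊔ Z) ^ (r + 1) := by
          rw [pow_succ', Submodule.sup_mul]
      _ ≤ U * (U ⊔ Z) ^ (r + 1) ⊔ Z * (U * (U ⊔ Z) ^ r ⊔ Z ^ (r + 1)) := by gcongr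
      _ = U * (U ⊔ Z) ^ (r + 1) ⊔ (Z * (U * (U ⊔ Z) ^ r) ⊔ Z ^ (r + 1 + 1)) := by
          rw [Submodule.mul_sup, ← pow_succ']
      _ ≤ U * (U ⊔ Z) ^ (r + 1) ⊔ Z ^ (r + 1 + 1) :=
          sup_le le_sup_left (sup_le_sup_right hZ _)

theorem finrank_pow_mul_sup_pow_le (U Z : Submodule K A) [FiniteDimensional K U]
    [FiniteDimensional K Z] {n e : ℕ} (hU : finrank K U ≤ n + 1) (hZ : finrank K Z ≤ e)
    (m r : ℕ) :
    finrank K ↥(U ^ m * (U ⊔ Z) ^ r) ≤ (e + r).choose r * (n + 1).multichoose (m + r) := by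
  have hUpow (i : ℕ) : finrank K ↥(U ^ i) ≤ (n + 1).multichoose i :=
    (finrank_pow_le U i).trans (multichoose_mono_left hU i)
  have hZpow (i : ℕ) : finrank K ↥(Z ^ i) ≤ e.multichoose i :=
    (finrank_pow_le Z i).trans (multichoose_mono_left hZ i)
  induction r generalizing m with
  | zero =>
    rw [pow_zero, mul_one, add_zero, Nat.choose_zero_right, one_mul]
    exact hUpow m
  | succ r ih =>
    have hsplit : U ^ m * (U ⊔ Z) ^ (r + 1) ≤
        U ^ (m + 1) * (U ⊔ Z) ^ r ⊔ U ^ m * Z ^ (r + 1) := by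
      rw [pow_succ U, mul_assoc, ← Submodule.mul_sup]
      gcongr
      exact sup_pow_succ_le U Z r
    have hlast : finrank K ↥(U ^ m * Z ^ (r + 1)) ≤
        e.multichoose (r + 1) * (n + 1).multichoose (m + (r + 1)) := by
      rw [mul_comm (e.multichoose _)]
      exact (finrank_mul_le _ _).trans (Nat.mul_le_mul
        ((hUpow m).trans (multichoose_succ_mono_right n (Nat.le_add_right m _))) (hZpow _))
    have hpascal : (e + r).choose r + e.multichoose (r + 1) = (e + (r + 1)).choose (r + 1) := by
      rw [Nat.multichoose_eq]
      exact (Nat.choose_succ_succ _ _).symm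
    calc finrank K ↥(U ^ m * (U ⊔ Z) ^ (r + 1))
        ≤ finrank K ↥(U ^ (m + 1) * (U ⊔ Z) ^ r) + finrank K ↥(U ^ m * Z ^ (r + 1)) :=
          (Submodule.finrank_mono hsplit).trans (Submodule.finrank_add_le_finrank_add_finrank _ _)
      _ ≤ (e + r).choose r * (n + 1).multichoose (m + (r + 1)) +
            e.multichoose (r + 1) * (n + 1).multichoose (m + (r + 1)) := by
          refine add_le_add ?_ hlast
          rw [← add_assoc, add_right_comm]
          exact ih (m + 1)
      _ = (e + (r + 1)).choose (r + 1) * (n + 1).multichoose (m + (r + 1)) := by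
          rw [← add_mul, hpascal]

theorem pow_add_le_pow_mul_pow {U V : Submodule K A} {r : ℕ} (h : V ^ (r + 1) ≤ U * V ^ r)
    (m : ℕ) : V ^ (m + r) ≤ U ^ m * V ^ r := by
  induction m with
  | zero => rw [zero_add, pow_zero, one_mul]
  | succ m ih =>
    calc V ^ (m + 1 + r) = V * V ^ (m + r) := by rw [Nat.add_right_comm, pow_succ']
      _ ≤ V * (U ^ m * V ^ r) := by gcongr
      _ = U ^ m * V ^ (r + 1) := by rw [mul_left_comm, pow_succ']
      _ ≤ U ^ m * (U * V ^ r) := by gcongr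
      _ = U ^ (m + 1) * V ^ r := by rw [← mul_assoc, pow_succ]

theorem finrank_pow_le_of_pow_succ_le {U V : Submodule K A} [FiniteDimensional K V] {n e r : ℕ}
    (hUV : U ≤ V) (hU : finrank K U ≤ n + 1) (hV : finrank K V ≤ n + 1 + e)
    (h : V ^ (r + 1) ≤ U * V ^ r) {d : ℕ} (hd : r ≤ d) :
    finrank K ↥(V ^ d) ≤ (e + r).choose r * (n + 1).multichoose d := by
  obtain ⟨W, Z, hUW, rfl, hW, hZ⟩ := exists_sup_eq_of_finrank_le_add hUV hU hV
  have : FiniteDimensional K W :=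
    Submodule.finiteDimensional_of_le (le_sup_left : W ≤ W ⊔ Z)
  have : FiniteDimensional K Z :=
    Submodule.finiteDimensional_of_le (le_sup_right : Z ≤ W ⊔ Z)
  obtain ⟨m, rfl⟩ := Nat.exists_eq_add_of_le' hd
  have hW' : (W ⊔ Z) ^ (r + 1) ≤ W * (W ⊔ Z) ^ r := h.trans (by gcongr)
  exact (Submodule.finrank_mono (pow_add_le_pow_mul_pow hW' m)).trans
    (finrank_pow_mul_sup_pow_le W Z hW hZ m r)

end PowersOfSubspaces

section LinearReductions

open Module MvPolynomial

theorem aeval_smul_const {R A σ : Type*} [CommSemiring R] [CommSemiring A] [Algebra R A]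
    {F : MvPolynomial σ R} {d : ℕ} (hF : F.IsHomogeneous d) (c : σ → R) (w : A) :
    aeval (fun i => c i • w) F = eval c F • w ^ d := by
  rw [aeval_def, eval₂_eq, eval_eq, Finset.sum_smul]
  refine Finset.sum_congr rfl fun s hs => ?_
  have hdeg : ∑ i ∈ s.support, s i = d := by
    by_contra hne
    exact mem_support_iff.mp hs (hF.coeff_eq_zero hne)
  simp only [smul_pow, Finset.prod_smul, Finset.prod_pow_eq_pow_sum, hdeg, ← Algebra.smul_def,
    mul_smul]

variable {K A : Type*} [Field K] [CommRing A] [Algebra K A]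

theorem exists_isHomogeneous_aeval_eq_zero {σ : Type*} [Fintype σ] {y : σ → A} {d : ℕ}
    (h : finrank K ↥(Submodule.span K (Set.range y) ^ d) < (Fintype.card σ).multichoose d) :
    ∃ F : MvPolynomial σ K, F.IsHomogeneous d ∧ F ≠ 0 ∧ aeval y F = 0 := by
  rw [← map_aeval_homogeneousSubmodule, ← finrank_homogeneousSubmodule (K := K) σ d,
    ← LinearMap.range_domRestrict] at h
  by_contra! hinj
  refine h.ne (LinearMap.finrank_range_of_inj ((injective_iff_map_eq_zero _).mpr fun F hF => ?_))
  by_contra hF0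
  exact hinj F.1 F.2 (fun h0 => hF0 (Subtype.ext h0)) hF

theorem subset_radical_span_map_ker {W : Submodule K A} {φ : W →ₗ[K] K} {w : W} (hw : φ w = 1)
    {σ : Type*} {y : σ → W} {F : MvPolynomial σ K} {d : ℕ} (hF : F.IsHomogeneous d)
    (hy : aeval (fun i => (y i : A)) F = 0) (hφ : eval (fun i => φ (y i)) F ≠ 0) :
    (W : Set A) ⊆ (Ideal.span ((LinearMap.ker φ).map W.subtype : Set A)).radical := by
  set π := Ideal.Quotient.mkₐ K (Ideal.span ((LinearMap.ker φ).map W.subtype : Set A))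
  have hπ (v : W) : π v = φ v • π w := by
    rw [← map_smul, Ideal.Quotient.mkₐ_eq_mk, Ideal.Quotient.mk_eq_mk_iff_sub_mem]
    refine Ideal.subset_span ⟨v - φ v • w, ?_, rfl⟩
    rw [SetLike.mem_coe, LinearMap.mem_ker, map_sub, map_smul, hw, smul_eq_mul, mul_one, sub_self]
  have hpow : π w ^ d = 0 := by
    have hFw := congrArg π hy
    rw [comp_aeval_apply, map_zero, funext fun i => hπ (y i), aeval_smul_const hF] at hFw
    exact (smul_eq_zero_iff_right hφ).mp hFw
  intro v hv
  refine ⟨d, Ideal.Quotient.eq_zero_iff_mem.mp ?_⟩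
  calc π v ^ d = (φ ⟨v, hv⟩ • π w) ^ d := congrArg (· ^ d) (hπ ⟨v, hv⟩)
    _ = 0 := by rw [smul_pow, hpow, smul_zero]

theorem exists_lt_subset_radical_span [Infinite K] (W : Submodule K A) [FiniteDimensional K W]
    {d : ℕ} (hd : d ≠ 0) (h : finrank K ↥(W ^ d) < (finrank K W).multichoose d) :
    ∃ W' < W, (W : Set A) ⊆ (Ideal.span (W' : Set A)).radical := by
  obtain ⟨F, hF, hF0, hFb⟩ : ∃ F : MvPolynomial (Fin (finrank K W)) K,
      F.IsHomogeneous d ∧ F ≠ 0 ∧ aeval (fun i => (finBasis K W i : A)) F = 0 :=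
    exists_isHomogeneous_aeval_eq_zero (by rwa [span_range_coe_finBasis, Fintype.card_fin])
  obtain ⟨a, ha⟩ : ∃ a, eval a F ≠ 0 := by
    by_contra! hzero
    exact hF0 (hF.eq_zero_of_forall_eval_eq_zero hzero)
  let φ : W →ₗ[K] K := (finBasis K W).constr K a
  have hφa : (fun i => φ (finBasis K W i)) = a :=
    funext fun i => (finBasis K W).constr_basis K a i
  have hφ : φ ≠ 0 := by
    rintro hzero
    have ha0 : a = 0 := by rw [← hφa, hzero]; rfl
    rw [ha0, eval_zero, constantCoeff_eq] at ha
    exact ha (hF.coeff_eq_zero (by rw [map_zero]; exact hd.symm))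
  obtain ⟨w, hw⟩ := LinearMap.surjective hφ 1
  refine ⟨(LinearMap.ker φ).map W.subtype, ?_,
    subset_radical_span_map_ker hw hF hFb (by rwa [hφa])⟩
  refine lt_of_le_not_ge (Submodule.map_subtype_le W _) fun hle => ?_
  obtain ⟨v, hv, hvw⟩ := hle w.2
  rw [← Subtype.ext hvw, LinearMap.mem_ker.mp hv] at hw
  exact zero_ne_one hw

theorem exists_finrank_le_subset_radical_span [Infinite K] (V : Submodule K A)
    [FiniteDimensional K V] {m d : ℕ} (hd : d ≠ 0)
    (h : finrank K ↥(V ^ d) < (m + 1).multichoose d) :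
    ∃ W ≤ V, finrank K W ≤ m ∧ (V : Set A) ⊆ (Ideal.span (W : Set A)).radical := by
  induction hr : finrank K V using Nat.strong_induction_on generalizing V with
  | _ r ih =>
    obtain hle | hlt := le_or_gt (finrank K V) m
    · exact ⟨V, le_rfl, hle, Ideal.subset_span.trans Ideal.le_radical⟩
    obtain ⟨V', hV'V, hV'⟩ := exists_lt_subset_radical_span V hd
      (h.trans_le (multichoose_mono_left hlt d))
    have : FiniteDimensional K V' := Submodule.finiteDimensional_of_le hV'V.le
    have hpow : V' ^ d ≤ V ^ d := by have := hV'V.le; gcongr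
    obtain ⟨W, hWV', hW, hrad⟩ := ih _ (hr ▸ Submodule.finrank_lt_finrank_of_lt hV'V) V'
      ((Submodule.finrank_mono hpow).trans_lt h) rfl
    refine ⟨W, hWV'.trans hV'V.le, hW, hV'.trans ?_⟩
    exact Ideal.radical_le_radical_iff.mpr (Ideal.span_le.mpr hrad)

open scoped Pointwise in
theorem exists_pow_le_restrictScalars {V : Submodule K A} [FiniteDimensional K V] {J : Ideal A}
    (h : (V : Set A) ⊆ J.radical) : ∃ s, ∀ t ≥ s, V ^ t ≤ J.restrictScalars K := by
  have hfg : (Ideal.span (V : Set A)).FG := by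
    rw [← span_range_coe_finBasis V, Ideal.span, Submodule.span_span_of_tower]
    exact Submodule.fg_span (Set.finite_range _)
  obtain ⟨s, hs⟩ := Ideal.exists_pow_le_of_le_radical_of_fg (Ideal.span_le.mpr h) hfg
  refine ⟨s, fun t ht => ?_⟩
  rw [Submodule.pow_eq_span_pow_set, Submodule.span_le]
  calc ((V : Set A) ^ t : Set A)
    _ ⊆ (Ideal.span (V : Set A) : Set A) ^ t :=
        Set.pow_subset_pow_left Ideal.subset_span
    _ ⊆ (Ideal.span (V : Set A) ^ t : Ideal A) := Submodule.pow_subset_pow _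
    _ ⊆ J := (Ideal.pow_le_pow_right ht).trans hs

end LinearReductions

section GradedQuotients

open Module MvPolynomial Filter

theorem homogeneousComponent_add_mul {R σ : Type*} [CommSemiring R] {l : MvPolynomial σ R}
    {m : ℕ} (hl : l.IsHomogeneous m) (g : MvPolynomial σ R) (r : ℕ) :
    homogeneousComponent (m + r) (l * g) = l * homogeneousComponent r g := by
  classical
  let _ : GradedAlgebra (homogeneousSubmodule σ R) := MvPolynomial.gradedAlgebra
  have hdecompose (p : MvPolynomial σ R) (i : ℕ) :
      (DirectSum.decompose (homogeneousSubmodule σ R) p i : MvPolynomial σ R) =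
        homogeneousComponent i p := decomposition.decompose'_apply p i
  rw [← hdecompose, ← hdecompose]
  exact DirectSum.coe_decompose_mul_add_of_left_mem (homogeneousSubmodule σ R) hl

variable {k : Type} [Field k] {N : ℕ} {I : Ideal (MvPolynomial (Fin N) k)}

theorem quotComponent_eq_pow (d : ℕ) : quotComponent k I d = quotComponent k I 1 ^ d := by
  rw [quotComponent, quotComponent, ← homogeneousSubmodule_one_pow, Submodule.map_pow]

instance finiteDimensional_quotComponent (d : ℕ) : FiniteDimensional k (quotComponent k I d) :=
  Module.Finite.map (homogeneousSubmodule (Fin N) k d) (Ideal.Quotient.mkₐ k I).toLinearMap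

theorem hilbFn_eq_finrank_pow (d : ℕ) :
    hilbFn k I d = finrank k ↥(quotComponent k I 1 ^ d) := by
  rw [hilbFn, quotComponent_eq_pow]

theorem finrank_quotComponent_one_le : finrank k (quotComponent k I 1) ≤ N := by
  refine (Submodule.finrank_map_le _ _).trans ?_
  rw [finrank_homogeneousSubmodule, Fintype.card_fin, Nat.multichoose_one_right]

theorem quotComponent_succ_le_mul (hI : IdealHomog k I)
    {W : Submodule k (MvPolynomial (Fin N) k ⧸ I)} (hW : W ≤ quotComponent k I 1) {r : ℕ}
    (h : quotComponent k I (r + 1) ≤ (Ideal.span (W : Set _)).restrictScalars k) :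
    quotComponent k I (r + 1) ≤ W * quotComponent k I r := by
  rintro _ ⟨f, hf, rfl⟩
  obtain ⟨m, c, w, hsum⟩ := Submodule.mem_span_set'.mp (h ⟨f, hf, rfl⟩)
  choose g hg using fun i => Ideal.Quotient.mk_surjective (c i)
  choose l hl hlw using fun i => hW (w i).2
  have hmem : f - ∑ i, l i * g i ∈ I := by
    rw [← Ideal.Quotient.eq, map_sum]
    refine hsum.symm.trans (Finset.sum_congr rfl fun i _ => ?_)
    rw [map_mul, hg, ← hlw, smul_eq_mul, mul_comm]
    rfl
  have hcomponent : Ideal.Quotient.mk I f =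
      ∑ i, Ideal.Quotient.mk I (l i) * Ideal.Quotient.mk I (homogeneousComponent r (g i)) := by
    have hmem' := hI _ hmem (1 + r)
    simp only [map_sub, map_sum, homogeneousComponent_add_mul (hl _)] at hmem'
    rw [homogeneousComponent_of_mem hf, if_pos (add_comm 1 r), ← Ideal.Quotient.eq] at hmem'
    simpa only [map_sum, map_mul] using hmem'
  rw [AlgHom.toLinearMap_apply, Ideal.Quotient.mkₐ_eq_mk, hcomponent]
  refine Submodule.sum_mem _ fun i _ => Submodule.mul_mem_mul ?_ ?_
  · exact (hlw i).symm ▸ (w i).2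
  · exact ⟨_, homogeneousComponent_mem r (g i), rfl⟩

theorem HasDeg.le_of_eventually_hilbFn_le {n D C : ℕ} (hD : HasDeg k I n D)
    (h : ∀ᶠ d in atTop, hilbFn k I d ≤ C * (n + 1).multichoose d) : D ≤ C := by
  obtain ⟨P, hPdeg, hPlead, hP⟩ := hD
  have hcoeff : P.coeff n ≤ (C • Polynomial.preHilbertPoly ℚ n 0).coeff n := by
    refine coeff_le_coeff_of_eventually_eval_le hPdeg.le ?_ ?_
    · exact (Polynomial.natDegree_smul_le _ _).trans (Polynomial.natDegree_preHilbertPoly ℚ n 0).le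
    · filter_upwards [h, hP] with d hd hPd
      rw [← hPd, Polynomial.eval_smul, eval_preHilbertPoly_zero, nsmul_eq_mul]
      exact_mod_cast hd
  rw [Polynomial.coeff_smul, Polynomial.coeff_preHilbertPoly_self, nsmul_eq_mul] at hcoeff
  rw [Polynomial.leadingCoeff, hPdeg] at hPlead
  have hfact : (0 : ℚ) < n.factorial := Nat.cast_pos.mpr n.factorial_pos
  rw [← Nat.cast_le (α := ℚ), hPlead]
  calc P.coeff n * n.factorial ≤ C * (n.factorial : ℚ)⁻¹ * n.factorial := by gcongr
    _ = C := inv_mul_cancel_right₀ hfact.ne' _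

theorem HasDeg.exists_hilbFn_lt_multichoose {n D : ℕ} (hD : HasDeg k I n D) :
    ∃ d ≠ 0, hilbFn k I d < (n + 2).multichoose d := by
  obtain ⟨P, hPdeg, -, hP⟩ := hD
  by_contra! hge
  have hcoeff : (Polynomial.preHilbertPoly ℚ (n + 1) 0).coeff (n + 1) ≤ P.coeff (n + 1) := by
    refine coeff_le_coeff_of_eventually_eval_le (Polynomial.natDegree_preHilbertPoly ℚ _ 0).le
      (hPdeg.le.trans n.le_succ) ?_
    filter_upwards [hP, eventually_ne_atTop 0] with d hPd hd
    rw [← hPd, eval_preHilbertPoly_zero]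
    exact_mod_cast hge d hd
  rw [Polynomial.coeff_preHilbertPoly_self,
    Polynomial.coeff_eq_zero_of_natDegree_lt (hPdeg.trans_lt n.lt_succ_self)] at hcoeff
  exact hcoeff.not_gt (by positivity)

theorem exists_reduction [Infinite k] {n D : ℕ} (hD : HasDeg k I n D)
    (hne : quotComponent k I 1 ≠ ⊥) :
    ∃ t, 0 < t ∧ ∃ L : Finset (MvPolynomial (Fin N) k ⧸ I),
      (L : Set (MvPolynomial (Fin N) k ⧸ I)) ⊆ quotComponent k I 1 ∧ L.card = n + 1 ∧
      quotComponent k I (t + 1) ≤ (Ideal.span (L : Set _)).restrictScalars k := by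
  obtain ⟨d, hd, hlt⟩ := hD.exists_hilbFn_lt_multichoose
  rw [hilbFn_eq_finrank_pow] at hlt
  obtain ⟨W, hWle, hW, hrad⟩ := exists_finrank_le_subset_radical_span _ hd hlt
  obtain ⟨s, hs⟩ := exists_pow_le_restrictScalars hrad
  have : FiniteDimensional k W := Submodule.finiteDimensional_of_le hWle
  obtain ⟨L, hL, hcard, hWL⟩ := exists_finset_card_eq_le_span hne hWle hW
  have hspan : Ideal.span (W : Set (MvPolynomial (Fin N) k ⧸ I)) ≤ Ideal.span L :=
    (Ideal.span_mono hWL).trans_eq (Submodule.span_span_of_tower _ _ _)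
  refine ⟨s + 1, s.succ_pos, L, hL, hcard, ?_⟩
  rw [quotComponent_eq_pow]
  exact fun x hx => hspan (hs (s + 2) (Nat.le_add_right s 2) hx)

theorem HasDeg.le_choose_of_quotComponent_le_span {n e D r : ℕ} (hI : IdealHomog k I)
    (hD : HasDeg k I n D) (hN : N ≤ n + 1 + e) {L : Finset (MvPolynomial (Fin N) k ⧸ I)}
    (hL : (L : Set (MvPolynomial (Fin N) k ⧸ I)) ⊆ quotComponent k I 1) (hcard : L.card ≤ n + 1)
    (h : quotComponent k I (r + 1) ≤ (Ideal.span (L : Set _)).restrictScalars k) :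
    D ≤ (e + r).choose r := by
  have hW : Submodule.span k (L : Set _) ≤ quotComponent k I 1 := Submodule.span_le.mpr hL
  have hmul := quotComponent_succ_le_mul hI hW
    (h.trans (Ideal.span_mono Submodule.subset_span))
  rw [quotComponent_eq_pow, quotComponent_eq_pow r] at hmul
  refine hD.le_of_eventually_hilbFn_le ?_
  filter_upwards [eventually_ge_atTop r] with d hd
  rw [hilbFn_eq_finrank_pow]
  exact finrank_pow_le_of_pow_succ_le hW ((finrank_span_finset_le_card L).trans hcard)
    (finrank_quotComponent_one_le.trans hN) hmul hd

theorem HasDeg.eq_zero_of_quotComponent_one_eq_bot {n D : ℕ} (hD : HasDeg k I n D)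
    (h : quotComponent k I 1 = ⊥) : D = 0 := by
  refine Nat.le_zero.mp (hD.le_of_eventually_hilbFn_le ?_)
  filter_upwards [eventually_ne_atTop 0] with d hd
  obtain ⟨d, rfl⟩ := Nat.exists_eq_add_one_of_ne_zero hd
  calc hilbFn k I (d + 1) = finrank k ↥(quotComponent k I 1 ^ (d + 1)) :=
        hilbFn_eq_finrank_pow _
    _ ≤ (finrank k (quotComponent k I 1)).multichoose (d + 1) := finrank_pow_le _ _
    _ = 0 := by rw [h, finrank_bot, Nat.multichoose_zero_succ]
    _ ≤ 0 * (n + 1).multichoose (d + 1) := Nat.zero_le _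

end GradedQuotients

end Paper

theorem stmt11_general (k : Type) [Field k] [Infinite k] (n e D : ℕ)
    (I : Ideal (MvPolynomial (Fin (n + e + 1)) k)) (hIhom : Paper.IdealHomog k I)
    (hD : Paper.HasDeg k I n D) :
    D ≤ (e + Paper.redNumAll k I (n + 1)).choose (Paper.redNumAll k I (n + 1)) := by
  by_cases hbot : Paper.quotComponent k I 1 = ⊥
  · exact (hD.eq_zero_of_quotComponent_one_eq_bot hbot).trans_le (Nat.zero_le _)
  · obtain ⟨-, L, hL, hcard, hspan⟩ := Nat.sInf_mem (Paper.exists_reduction hD hbot)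
    exact hD.le_choose_of_quotComponent_le_span hIhom (Nat.add_right_comm n e 1).le hL hcard.le
      hspan

/-- Theorem 1.1 (inequality): a non-degenerate closed subscheme `X ⊆ ℙ^{n+e}` of
dimension `n`, codimension `e` and reduction number `r` satisfies
`deg(X) ≤ C(e + r, r)`. -/
theorem stmt11 (k : Type) [Field k] [IsAlgClosed k] (n e D : ℕ) (he : 0 < e)
    (I : Ideal (MvPolynomial (Fin (n + e + 1)) k))
    (hIhom : Paper.IdealHomog k I) (hsat : Paper.IsSaturatedIdeal k I)
    (hnd : Paper.Nondegenerate k I) (hproper : I ≠ ⊤)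
    (hdim : ringKrullDim (MvPolynomial (Fin (n + e + 1)) k ⧸ I) = n + 1)
    (hD : Paper.HasDeg k I n D) :
    D ≤ (e + Paper.redNumAll k I (n + 1)).choose (Paper.redNumAll k I (n + 1)) := by
  have : Infinite k := IsAlgClosed.instInfinite
  exact stmt11_general k n e D I hIhom hD
end
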